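/- arXiv:math/0305087 — 2 statements merged into one kernel-verified Lean document; each statement's English description precedes it below -/
import Mathlib

section
/- Let h ≥ 2 be an integer and let f : ℤ → ℕ ∪ {∞} be any function such that f⁻¹(0) is finite. Then there exist uncountably many sets A of integers such that r_{A,h}(n) = f(n) for all integers n, and such that there are constants c_0 > 0 and x_0 with: the number of elements a ∈ A with |a| ≤ x is at least c_0 · x^{1/(2h-1)} for all x ≥ x_0. -/
open scoped BigOperators

/-- The representation function of order `h`: the number (in `ℕ∞`) of ways to
write `n = a₁ + a₂ + ⋯ + a_h` with all `aᵢ ∈ A` and `a₁ ≤ a₂ ≤ ⋯ ≤ a_h`. -/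
noncomputable def repH (h : ℕ) (A : Set ℤ) (n : ℤ) : ℕ∞ :=
  {a : Fin h → ℤ | (∀ i, a i ∈ A) ∧ Monotone a ∧ ∑ i, a i = n}.encard

/-!
Write `h = m + 1`. The set is built greedily from finite `B_m`-sets whose representation numbers
do not exceed `f`. To raise the representation number of a target `u`, adjoin `b₁ = m * c + u` and
`b₂ = -c`, so that `u = b₁ + b₂ + ⋯ + b₂` with `m` summands `b₂`. A sum of `h` elements is then an
affine form in `c`; if `c` avoids the coincidences between forms of different slope, equal sums
have equal slopes. Since `m * p - q` with `p + q ≤ h` determines `(p, q)` up to the single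
coincidence `m * 1 - m = 0`, the `B_m`-property makes every other new sum have one representation,
so nothing but the representation number of `u` can exceed `1` because of the new elements.

A form of nonzero slope has a new element among its summands, so for a set of `n` elements there
are `O(n ^ m)` of them, to be separated from `O(n ^ (m + 1))` forms in all, the zeros of `f` being
treated as further constant forms. So some `c = O(n ^ (2 * m + 1))` is admissible, and
`2 * m + 1 = 2 * h - 1` gives the exponent of the theorem. Uncountability is a diagonal argument:
the construction can also avoid any prescribed sufficiently sparse sequence, in particular one
that meets every set of a given countable family.
-/

/-- The set of representations of `n` as a sum of `h` elements of `A`, the order of the summands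
being disregarded; a representation is encoded as the multiset of its summands. -/
def reprs {M : Type*} [AddCommMonoid M] (h : ℕ) (A : Set M) (n : M) : Set (Multiset M) :=
  {s | (∀ a ∈ s, a ∈ A) ∧ s.card = h ∧ s.sum = n}

/-- A `B_g`-set (a Sidon set when `g = 2`): sums of `g` elements of `A` determine their summands
up to order. -/
def IsBSet {M : Type*} [AddCommMonoid M] (g : ℕ) (A : Set M) : Prop :=
  ∀ n, (reprs g A n).Subsingleton

section Reprs

variable {M : Type*} [AddCommMonoid M] {g h k : ℕ} {A B : Set M} {n : M}

lemma reprs_mono (hAB : A ⊆ B) : reprs h A n ⊆ reprs h B n :=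
  fun _ ⟨hs, hcard, hsum⟩ ↦ ⟨fun a ha ↦ hAB (hs a ha), hcard, hsum⟩

lemma cons_mem_reprs {a : M} {s : Multiset M} (ha : a ∈ A) (hs : s ∈ reprs h A n) :
    a ::ₘ s ∈ reprs (h + 1) A (a + n) :=
  ⟨Multiset.forall_mem_cons.2 ⟨ha, hs.1⟩, by rw [Multiset.card_cons, hs.2.1],
    by rw [Multiset.sum_cons, hs.2.2]⟩

lemma reprs_empty (hh : h ≠ 0) : reprs h (∅ : Set M) n = ∅ := by
  refine Set.eq_empty_of_forall_notMem fun s hs ↦ hh ?_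
  rw [← hs.2.1, Multiset.eq_zero_of_forall_notMem hs.1, Multiset.card_zero]

lemma isBSet_empty : IsBSet g (∅ : Set M) := fun _ s hs t ht ↦ by
  rw [Multiset.eq_zero_of_forall_notMem hs.1, Multiset.eq_zero_of_forall_notMem ht.1]

lemma IsBSet.of_le (hA : IsBSet g A) (hkg : k ≤ g) : IsBSet k A := by
  rintro n s ⟨hs, hscard, hssum⟩ t ⟨ht, htcard, htsum⟩
  rcases s.empty_or_exists_mem with rfl | ⟨a, ha⟩
  · exact (Multiset.card_eq_zero.1 (htcard.trans hscard.symm)).symm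
  have pad : ∀ {r : Multiset M}, (∀ x ∈ r, x ∈ A) → r.card = k → r.sum = n →
      r + Multiset.replicate (g - k) a ∈ reprs g A (n + (g - k) • a) := fun hr hcard hsum ↦
    ⟨fun x hx ↦ (Multiset.mem_add.1 hx).elim (hr x)
        fun hx ↦ Multiset.eq_of_mem_replicate hx ▸ hs a ha,
      by rw [Multiset.card_add, Multiset.card_replicate]; omega,
      by rw [Multiset.sum_add, Multiset.sum_replicate, hsum]⟩
  exact add_right_cancel (hA _ (pad hs hscard hssum) (pad ht htcard htsum))

lemma IsBSet.eq_of_count_eq {M : Type*} [AddCancelCommMonoid M] [DecidableEq M] {A : Set M}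
    [DecidablePred (· ∈ A)] (hA : IsBSet g A) {s t : Multiset M} (hcard : s.card = t.card)
    (hsum : s.sum = t.sum) (hcount : ∀ a ∉ A, s.count a = t.count a)
    (hle : (s.filter (· ∈ A)).card ≤ g) : s = t := by
  have hout : s.filter (· ∉ A) = t.filter (· ∉ A) := by
    ext a
    by_cases ha : a ∈ A
    · simp only [Multiset.count_filter, ha, not_true_eq_false, if_false]
    · simp only [Multiset.count_filter, ha, not_false_eq_true, if_true, hcount a ha]
  rw [← Multiset.filter_add_not (· ∈ A) s, ← Multiset.filter_add_not (· ∈ A) t, hout]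
    at hcard hsum
  rw [Multiset.card_add, Multiset.card_add, add_left_inj] at hcard
  rw [Multiset.sum_add, Multiset.sum_add, add_left_inj] at hsum
  have hin : s.filter (· ∈ A) = t.filter (· ∈ A) :=
    hA.of_le hle _ ⟨fun _ ha ↦ (Multiset.mem_filter.1 ha).2, rfl, rfl⟩
      ⟨fun _ ha ↦ (Multiset.mem_filter.1 ha).2, hcard.symm, hsum.symm⟩
  rw [← Multiset.filter_add_not (· ∈ A) s, ← Multiset.filter_add_not (· ∈ A) t, hin, hout]

lemma reprs_iUnion_of_directed {ι : Type*} [Nonempty ι] {S : ι → Set M}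
    (hS : Directed (· ⊆ ·) S) : reprs h (⋃ i, S i) n = ⋃ i, reprs h (S i) n := by
  classical
  refine Set.Subset.antisymm ?_ (Set.iUnion_subset fun i ↦ reprs_mono (Set.subset_iUnion S i))
  rintro s ⟨hs, hcard, hsum⟩
  obtain ⟨i, hi⟩ := hS.exists_mem_subset_of_finset_subset_biUnion (s := s.toFinset)
    fun a ha ↦ hs a (Multiset.mem_toFinset.1 ha)
  exact Set.mem_iUnion.2 ⟨i, fun a ha ↦ hi (Multiset.mem_toFinset.2 ha), hcard, hsum⟩

open scoped Pointwise in
lemma sum_mem_card_nsmul [DecidableEq M] {L : Finset M} {s : Multiset M}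
    (hs : ∀ a ∈ s, a ∈ L) : s.sum ∈ s.card • L := by
  induction s using Multiset.induction_on with
  | empty => simp
  | cons a s ih =>
    rw [Multiset.forall_mem_cons] at hs
    rw [Multiset.sum_cons, Multiset.card_cons, succ_nsmul']
    exact Finset.add_mem_add hs.1 (ih hs.2)

end Reprs

lemma repH_eq_encard_reprs (h : ℕ) (A : Set ℤ) (n : ℤ) : repH h A n = (reprs h A n).encard := by
  have hinj : Set.InjOn (fun a : Fin h → ℤ ↦ (List.ofFn a : Multiset ℤ))
      {a | (∀ i, a i ∈ A) ∧ Monotone a ∧ ∑ i, a i = n} := by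
    rintro a ⟨-, ha, -⟩ b ⟨-, hb, -⟩ hab
    exact List.ofFn_injective
      ((Multiset.coe_eq_coe.1 hab).eq_of_sortedLE ha.sortedLE_ofFn hb.sortedLE_ofFn)
  rw [repH, ← hinj.encard_image]
  congr 1
  ext s
  constructor
  · rintro ⟨a, ⟨ha, -, hsum⟩, rfl⟩
    exact ⟨by simpa [List.mem_ofFn] using ha, by simp, by simpa [List.sum_ofFn] using hsum⟩
  · rintro ⟨hs, rfl, hsum⟩
    have hsort : List.ofFn (fun i : Fin s.card ↦ (s.sort (· ≤ ·)).get (i.cast (by simp))) =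
        s.sort (· ≤ ·) := by
      rw [← List.ofFn_congr (by simp), List.ofFn_get]
    refine ⟨fun i ↦ (s.sort (· ≤ ·)).get (i.cast (by simp)), ⟨fun i ↦ hs _ ?_, ?_, ?_⟩,
      by simp only [hsort, Multiset.sort_eq]⟩
    · exact (Multiset.mem_sort (· ≤ ·)).1 (List.get_mem _ _)
    · rw [← List.sortedLE_ofFn_iff, hsort]
      exact (Multiset.pairwise_sort s (· ≤ ·)).sortedLE
    · rw [← List.sum_ofFn, hsort, ← Multiset.sum_coe, Multiset.sort_eq, hsum]

section Limits

lemma encard_iUnion_of_directed {α ι : Type*} [Nonempty ι] {R : ι → Set α}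
    (hR : Directed (· ⊆ ·) R) : (⋃ i, R i).encard = ⨆ i, (R i).encard := by
  refine le_antisymm (ENat.forall_natCast_le_iff_le.1 fun j hj ↦ ?_)
    (iSup_le fun i ↦ Set.encard_le_encard (Set.subset_iUnion R i))
  obtain ⟨t, ht, htj⟩ := Set.exists_subset_encard_eq hj
  have htfin : t.Finite := Set.finite_of_encard_eq_coe htj
  obtain ⟨i, hi⟩ := hR.exists_mem_subset_of_finset_subset_biUnion (s := htfin.toFinset)
    (by rwa [htfin.coe_toFinset])
  rw [htfin.coe_toFinset] at hi
  exact htj ▸ le_iSup_of_le i (Set.encard_le_encard hi)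

open Filter in
lemma iSup_eq_of_frequently_lt {a : ℕ → ℕ∞} {b : ℕ∞} (ha : Monotone a) (hab : ∀ k, a k ≤ b)
    (hlt : ∃ᶠ k in atTop, a k < b → a k < a (k + 1)) : ⨆ k, a k = b := by
  refine (iSup_le hab).eq_of_not_lt fun hsup ↦ ?_
  obtain ⟨K, hK⟩ := ENat.exists_eq_iSup_of_lt_top (hsup.trans_le le_top)
  obtain ⟨k, hKk, hk⟩ := frequently_atTop.1 hlt K
  have hmax : a k = ⨆ k, a k := (le_iSup a k).antisymm (hK ▸ ha hKk)
  exact (hk (hmax ▸ hsup)).not_ge (hmax ▸ le_iSup a (k + 1))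

open Filter in
lemma exists_seq_frequently_eq (α : Type*) [Nonempty α] [Countable α] :
    ∃ v : ℕ → α, ∀ a, ∃ᶠ k in atTop, v k = a := by
  obtain ⟨e, he⟩ := exists_surjective_nat α
  refine ⟨fun k ↦ e k.unpair.1, fun a ↦ frequently_atTop.2 fun N ↦ ?_⟩
  obtain ⟨i, rfl⟩ := he a
  exact ⟨Nat.pair i N, Nat.right_le_pair i N, by simp only [Nat.unpair_pair]⟩

lemma not_countable_of_forall_exists_avoiding {α : Type*} [Infinite α] {Q : Set (Set α)}
    {F : ℕ → Set α} (hF : ∀ k, (F k).Finite) (hQ : ∀ A ∈ Q, A.Infinite)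
    (havoid : ∀ x : ℕ → α, (∀ k, x k ∉ F k) → ∃ A ∈ Q, ∀ k, x k ∉ A) : ¬ Q.Countable := by
  intro hcount
  obtain ⟨g, hg⟩ := Set.countable_iff_exists_subset_range.1 hcount
  have hpick : ∀ k, ∃ a, a ∉ F k ∧ (g k ∈ Q → a ∈ g k) := fun k ↦ by
    by_cases hk : g k ∈ Q
    · obtain ⟨a, ha, haF⟩ := (hQ _ hk).exists_notMem_finite (hF k)
      exact ⟨a, haF, fun _ ↦ ha⟩
    · obtain ⟨a, haF⟩ := (hF k).exists_notMem
      exact ⟨a, haF, fun h ↦ absurd h hk⟩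
  choose x hxF hxg using hpick
  obtain ⟨A, hA, hxA⟩ := havoid x hxF
  obtain ⟨k, rfl⟩ := hg hA
  exact hxA k (hxg k hA)

end Limits

section Weight

/-- The weight of a multiset `s` of integers with respect to a pair `(b₁, b₂)`. If
`b₁ = m * c + u` and `b₂ = -c`, it is the coefficient of `c` in the sum of `s` when `c` is an
indeterminate. -/
def weight (m : ℕ) (b₁ b₂ : ℤ) (s : Multiset ℤ) : ℤ := m * s.count b₁ - s.count b₂

variable {m : ℕ} {b₁ b₂ : ℤ} {s t : Multiset ℤ}

lemma weight_add : weight m b₁ b₂ (s + t) = weight m b₁ b₂ s + weight m b₁ b₂ t := by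
  simp only [weight, Multiset.count_add, Nat.cast_add]
  ring

lemma weight_eq_zero_of_notMem (h₁ : b₁ ∉ s) (h₂ : b₂ ∉ s) : weight m b₁ b₂ s = 0 := by
  simp [weight, Multiset.count_eq_zero_of_notMem, h₁, h₂]

lemma weight_singleton_left (hne : b₁ ≠ b₂) : weight m b₁ b₂ {b₁} = m := by
  simp [weight, hne.symm]

lemma weight_singleton_right (hne : b₁ ≠ b₂) : weight m b₁ b₂ {b₂} = -1 := by
  simp [weight, hne]

lemma count_add_count_le_card {α : Type*} [DecidableEq α] {a b : α} (hne : a ≠ b)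
    (s : Multiset α) : s.count a + s.count b ≤ s.card := by
  induction s using Multiset.induction_on with
  | empty => simp
  | cons x s ih =>
    rw [Multiset.count_cons, Multiset.count_cons, Multiset.card_cons]
    have : ¬ (a = x ∧ b = x) := fun h ↦ hne (h.1.trans h.2.symm)
    split_ifs <;> grind

lemma eq_or_eq_zero_of_mul_sub_eq_of_le {p q p' q' : ℕ} (hle : p ≤ p')
    (hpq' : p' + q' ≤ m + 1) (h : (m : ℤ) * p - q = m * p' - q') :
    (p = p' ∧ q = q') ∨ (p = 0 ∧ q = 0) := by
  rcases hle.eq_or_lt with rfl | hlt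
  · exact Or.inl ⟨rfl, by omega⟩
  · obtain ⟨e, rfl⟩ := Nat.exists_eq_add_of_lt hlt
    have hq' : m * e + q + m = q' := by zify; push_cast at h; linarith
    exact Or.inr (by generalize m * e = w at hq'; omega)

lemma count_eq_or_notMem_of_weight_eq (hne : b₁ ≠ b₂) (hs : s.card ≤ m + 1)
    (ht : t.card ≤ m + 1) (h : weight m b₁ b₂ s = weight m b₁ b₂ t) :
    (s.count b₁ = t.count b₁ ∧ s.count b₂ = t.count b₂) ∨
      (b₁ ∉ s ∧ b₂ ∉ s) ∨ (b₁ ∉ t ∧ b₂ ∉ t) := by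
  have hs' := (count_add_count_le_card hne s).trans hs
  have ht' := (count_add_count_le_card hne t).trans ht
  simp only [← Multiset.count_eq_zero]
  rcases le_total (s.count b₁) (t.count b₁) with hle | hle
  · have := eq_or_eq_zero_of_mul_sub_eq_of_le hle ht' h
    tauto
  · have := eq_or_eq_zero_of_mul_sub_eq_of_le hle hs' h.symm
    tauto

end Weight

/-- A pair of new elements that can be adjoined to `A` with full control over the sums of `m + 1`
elements: such a sum determines the weight of its summands, which vanishes if the sum lies in the
forbidden set `Z`. -/
structure IsGenericPair (m : ℕ) (A Z : Set ℤ) (b₁ b₂ : ℤ) : Prop where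
  ne : b₁ ≠ b₂
  left_notMem : b₁ ∉ A ∪ Z
  right_notMem : b₂ ∉ A ∪ Z
  weight_eq : ∀ {n s t}, s ∈ reprs (m + 1) (insert b₁ (insert b₂ A)) n →
    t ∈ reprs (m + 1) (insert b₁ (insert b₂ A)) n → weight m b₁ b₂ s = weight m b₁ b₂ t
  weight_eq_zero : ∀ {n s}, n ∈ Z → s ∈ reprs (m + 1) (insert b₁ (insert b₂ A)) n →
    weight m b₁ b₂ s = 0

namespace IsGenericPair

variable {m k : ℕ} {A Z : Set ℤ} {b₁ b₂ n : ℤ} {s t : Multiset ℤ}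

lemma eq_of_count_eq [DecidablePred (· ∈ A)] (hG : IsGenericPair m A Z b₁ b₂) (hA : IsBSet m A)
    (hs : s ∈ reprs k (insert b₁ (insert b₂ A)) n) (ht : t ∈ reprs k (insert b₁ (insert b₂ A)) n)
    (h₁ : s.count b₁ = t.count b₁) (h₂ : s.count b₂ = t.count b₂)
    (hle : (s.filter (· ∈ A)).card ≤ m) : s = t := by
  refine hA.eq_of_count_eq (hs.2.1.trans ht.2.1.symm) (hs.2.2.trans ht.2.2.symm)
    (fun a ha ↦ ?_) hle
  rcases eq_or_ne a b₁ with rfl | ha₁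
  · exact h₁
  rcases eq_or_ne a b₂ with rfl | ha₂
  · exact h₂
  have hB : a ∉ insert b₁ (insert b₂ A) := by simp [ha, ha₁, ha₂]
  rw [Multiset.count_eq_zero_of_notMem fun h ↦ hB (hs.1 a h),
    Multiset.count_eq_zero_of_notMem fun h ↦ hB (ht.1 a h)]

lemma isBSet (hG : IsGenericPair m A Z b₁ b₂) (hA : IsBSet m A) :
    IsBSet m (insert b₁ (insert b₂ A)) := by
  classical
  intro n s hs t ht
  have hb₁ : b₁ ∈ insert b₁ (insert b₂ A) := Set.mem_insert _ _
  have hs' := cons_mem_reprs hb₁ hs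
  have ht' := cons_mem_reprs hb₁ ht
  have hcount := (count_eq_or_notMem_of_weight_eq hG.ne hs'.2.1.le ht'.2.1.le
    (hG.weight_eq hs' ht')).resolve_right (by simp)
  simp only [Multiset.count_cons_self, Multiset.count_cons_of_ne hG.ne.symm,
    Nat.add_right_cancel_iff] at hcount
  exact hG.eq_of_count_eq hA hs ht hcount.1 hcount.2
    ((Multiset.card_le_card (Multiset.filter_le _ s)).trans hs.2.1.le)

lemma eq_of_weight_ne_zero (hG : IsGenericPair m A Z b₁ b₂) (hA : IsBSet m A)
    (hs : s ∈ reprs (m + 1) (insert b₁ (insert b₂ A)) n)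
    (ht : t ∈ reprs (m + 1) (insert b₁ (insert b₂ A)) n) (hw : weight m b₁ b₂ s ≠ 0) :
    s = t := by
  classical
  have hst := hG.weight_eq hs ht
  have mem_of_ne {r : Multiset ℤ} (hr : weight m b₁ b₂ r ≠ 0) : ¬ (b₁ ∉ r ∧ b₂ ∉ r) :=
    fun h ↦ hr (weight_eq_zero_of_notMem h.1 h.2)
  have hcount := (count_eq_or_notMem_of_weight_eq hG.ne hs.2.1.le ht.2.1.le hst).resolve_right
    (not_or.2 ⟨mem_of_ne hw, mem_of_ne (hst ▸ hw)⟩)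
  refine hG.eq_of_count_eq hA hs ht hcount.1 hcount.2 (Nat.le_of_lt_succ ?_)
  rw [Nat.succ_eq_add_one, ← hs.2.1]
  refine Multiset.card_lt_card ((Multiset.filter_le _ s).lt_of_ne fun h ↦ ?_)
  have hsA := Multiset.filter_eq_self.1 h
  exact mem_of_ne hw ⟨fun h ↦ hG.left_notMem (Or.inl (hsA _ h)),
    fun h ↦ hG.right_notMem (Or.inl (hsA _ h))⟩

lemma mem_reprs_or_eq_of_weight_eq_zero (hG : IsGenericPair m A Z b₁ b₂)
    (hs : s ∈ reprs (m + 1) (insert b₁ (insert b₂ A)) n) (hw : weight m b₁ b₂ s = 0) :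
    s ∈ reprs (m + 1) A n ∨ s = b₁ ::ₘ Multiset.replicate m b₂ := by
  set t := b₁ ::ₘ Multiset.replicate m b₂ with ht
  have ht₁ : t.count b₁ = 1 := by simp [ht, Multiset.count_replicate, hG.ne.symm]
  have ht₂ : t.count b₂ = m := by simp [ht, Multiset.count_cons_of_ne hG.ne.symm]
  have htcard : t.card = m + 1 := by simp [ht]
  rcases count_eq_or_notMem_of_weight_eq hG.ne hs.2.1.le htcard.le
      (hw.trans (by simp [weight, ht₁, ht₂])) with ⟨h₁, h₂⟩ | ⟨h₁, h₂⟩ | ⟨h₁, -⟩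
  · refine Or.inr (Multiset.eq_of_le_of_card_le (Multiset.le_iff_count.2 fun a ↦ ?_)
      (hs.2.1.trans htcard.symm).le).symm
    by_cases ha₁ : a = b₁
    · rw [ha₁, h₁]
    by_cases ha₂ : a = b₂
    · rw [ha₂, h₂]
    simp [ht, ha₁, Ne.symm ha₂, Multiset.count_replicate]
  · refine Or.inl ⟨fun a ha ↦ ?_, hs.2⟩
    exact ((hs.1 a ha).resolve_left fun h ↦ h₁ (h ▸ ha)).resolve_left fun h ↦ h₂ (h ▸ ha)
  · simp [ht] at h₁

lemma sum_cons_replicate : (b₁ ::ₘ Multiset.replicate m b₂).sum = b₁ + m * b₂ := by simp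

lemma encard_reprs_le (hG : IsGenericPair m A Z b₁ b₂) (hA : IsBSet m A) {f : ℤ → ℕ∞}
    (hZ : ∀ n, f n = 0 → n ∈ Z) (hf : ∀ n, (reprs (m + 1) A n).encard ≤ f n)
    (hlt : (reprs (m + 1) A (b₁ + m * b₂)).encard < f (b₁ + m * b₂)) (n : ℤ) :
    (reprs (m + 1) (insert b₁ (insert b₂ A)) n).encard ≤ f n := by
  by_cases hw : ∃ s ∈ reprs (m + 1) (insert b₁ (insert b₂ A)) n, weight m b₁ b₂ s ≠ 0
  · obtain ⟨s, hs, hw⟩ := hw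
    calc (reprs (m + 1) (insert b₁ (insert b₂ A)) n).encard
        ≤ ({s} : Set (Multiset ℤ)).encard :=
          Set.encard_le_encard fun t ht ↦ (hG.eq_of_weight_ne_zero hA hs ht hw).symm
      _ = 1 := Set.encard_singleton s
      _ ≤ f n := Order.one_le_iff_ne_zero.2 fun hn ↦ hw (hG.weight_eq_zero (hZ n hn) hs)
  push Not at hw
  by_cases hn : n = b₁ + m * b₂
  · subst hn
    refine (Set.encard_le_encard (t := insert (b₁ ::ₘ Multiset.replicate m b₂) (reprs _ A _))
      fun s hs ↦ ?_).trans ((Set.encard_insert_le _ _).trans (Order.add_one_le_of_lt hlt))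
    exact (hG.mem_reprs_or_eq_of_weight_eq_zero hs (hw s hs)).symm
  · refine (Set.encard_le_encard fun s hs ↦ ?_).trans (hf n)
    refine (hG.mem_reprs_or_eq_of_weight_eq_zero hs (hw s hs)).resolve_right fun h ↦ hn ?_
    rw [← hs.2.2, h, sum_cons_replicate]

lemma encard_reprs_lt (hG : IsGenericPair m A Z b₁ b₂)
    (hfin : (reprs (m + 1) A (b₁ + m * b₂)).Finite) :
    (reprs (m + 1) A (b₁ + m * b₂)).encard <
      (reprs (m + 1) (insert b₁ (insert b₂ A)) (b₁ + m * b₂)).encard := by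
  have hsub : A ⊆ insert b₁ (insert b₂ A) :=
    (Set.subset_insert _ _).trans (Set.subset_insert _ _)
  refine hfin.encard_lt_encard ⟨reprs_mono hsub, fun hsup ↦ ?_⟩
  have hnew : b₁ ::ₘ Multiset.replicate m b₂ ∈
      reprs (m + 1) (insert b₁ (insert b₂ A)) (b₁ + m * b₂) := by
    refine ⟨fun a ha ↦ ?_, by simp, sum_cons_replicate⟩
    rcases Multiset.mem_cons.1 ha with rfl | ha
    · exact Set.mem_insert _ _
    · exact Or.inr (Or.inl (Multiset.eq_of_mem_replicate ha))
  exact hG.left_notMem (Or.inl ((hsup hnew).1 b₁ (Multiset.mem_cons_self _ _)))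

end IsGenericPair

section Genericity

open scoped Pointwise

lemma exists_nat_forall_affine_ne (V W : Finset (ℤ × ℤ)) : ∃ c : ℕ, c ≤ V.card * W.card ∧
    ∀ v ∈ V, ∀ w ∈ W, v.1 ≠ w.1 → v.1 * (c : ℤ) + v.2 ≠ w.1 * c + w.2 := by
  let root : (ℤ × ℤ) × (ℤ × ℤ) → ℕ := fun x ↦ ((x.2.2 - x.1.2) / (x.1.1 - x.2.1)).toNat
  have hlt : ((V ×ˢ W).image root).card < (Finset.range (V.card * W.card + 1)).card := by
    rw [Finset.card_range, Nat.lt_succ_iff, ← Finset.card_product]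
    exact Finset.card_image_le
  obtain ⟨c, hc, hroot⟩ := Finset.exists_mem_notMem_of_card_lt_card hlt
  refine ⟨c, Nat.lt_succ_iff.1 (Finset.mem_range.1 hc), fun v hv w hw hne heq ↦ hroot ?_⟩
  refine Finset.mem_image.2 ⟨(v, w), Finset.mk_mem_product hv hw, ?_⟩
  have hmul : w.2 - v.2 = (v.1 - w.1) * c := by linarith
  simp only [root, hmul, Int.mul_ediv_cancel_left _ (sub_ne_zero.2 hne), Int.toNat_natCast]

/-- The sum of `s` as an affine form in the parameter `c = -b₂`: the pair `(w, r)` stands for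
`w * c + r`, where `w` is the weight of `s`. -/
def affineForm (m : ℕ) (b₁ b₂ : ℤ) (s : Multiset ℤ) : ℤ × ℤ :=
  (weight m b₁ b₂ s, s.sum + weight m b₁ b₂ s * b₂)

/-- The affine forms of the new elements `b₁ = m * c + u` and `b₂ = -c`. -/
def newForms (m : ℕ) (u : ℤ) : Finset (ℤ × ℤ) := {((m : ℤ), u), (-1, 0)}

/-- The affine forms of `0`, of the elements of `A` and of the new elements. Including `0` makes
the sums of `k` forms increase with `k`. -/
def letterForms (m : ℕ) (u : ℤ) (A : Finset ℤ) : Finset (ℤ × ℤ) :=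
  newForms m u ∪ (insert 0 A).image (Prod.mk 0)

variable {m : ℕ} {u b₁ b₂ : ℤ} {A : Finset ℤ} {s : Multiset ℤ}

lemma card_letterForms_le : (letterForms m u A).card ≤ A.card + 3 :=
  calc (letterForms m u A).card
      ≤ (newForms m u).card + ((insert 0 A).image (Prod.mk (0 : ℤ))).card :=
        Finset.card_union_le _ _
    _ ≤ 2 + (A.card + 1) :=
        add_le_add Finset.card_le_two (Finset.card_image_le.trans (Finset.card_insert_le _ _))
    _ = A.card + 3 := by ring

lemma mk_zero_mem_letterForms {a : ℤ} (ha : a ∈ insert 0 A) : (0, a) ∈ letterForms m u A :=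
  Finset.mem_union_right _ (Finset.mem_image_of_mem _ ha)

lemma newForms_subset_add_nsmul (k : ℕ) :
    newForms m u ⊆ newForms m u + k • letterForms m u A :=
  Finset.subset_add_left _
    (Finset.zero_mem_nsmul (mk_zero_mem_letterForms (Finset.mem_insert_self _ _)))

lemma letterForms_subset_nsmul {k : ℕ} (hk : k ≠ 0) : letterForms m u A ⊆ k • letterForms m u A :=
  Finset.subset_nsmul (mk_zero_mem_letterForms (Finset.mem_insert_self _ _)) hk

lemma affineForm_eval : (affineForm m b₁ b₂ s).1 * -b₂ + (affineForm m b₁ b₂ s).2 = s.sum := by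
  simp only [affineForm]
  ring

lemma affineForm_cons (a : ℤ) :
    affineForm m b₁ b₂ (a ::ₘ s) = affineForm m b₁ b₂ {a} + affineForm m b₁ b₂ s := by
  simp only [affineForm, ← Multiset.singleton_add, weight_add, Multiset.sum_add, Prod.mk_add_mk]
  congr 1
  ring

lemma affineForm_singleton_left_mem (hne : b₁ ≠ b₂) :
    affineForm m b₁ b₂ {b₁} ∈ newForms m (b₁ + m * b₂) := by
  simp [affineForm, newForms, weight_singleton_left hne]

lemma affineForm_singleton_right_mem (hne : b₁ ≠ b₂) :
    affineForm m b₁ b₂ {b₂} ∈ newForms m (b₁ + m * b₂) := by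
  simp [affineForm, newForms, weight_singleton_right hne]

lemma affineForm_singleton_mem (hne : b₁ ≠ b₂) {a : ℤ} (ha : a = b₁ ∨ a = b₂ ∨ a ∈ A) :
    affineForm m b₁ b₂ {a} ∈ letterForms m (b₁ + m * b₂) A := by
  rcases eq_or_ne a b₁ with rfl | ha₁
  · exact Finset.mem_union_left _ (affineForm_singleton_left_mem hne)
  rcases eq_or_ne a b₂ with rfl | ha₂
  · exact Finset.mem_union_left _ (affineForm_singleton_right_mem hne)
  have haA : a ∈ A := (ha.resolve_left ha₁).resolve_left ha₂
  rw [affineForm, weight_eq_zero_of_notMem (by simpa using Ne.symm ha₁)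
    (by simpa using Ne.symm ha₂), Multiset.sum_singleton, zero_mul, add_zero]
  exact mk_zero_mem_letterForms (Finset.mem_insert_of_mem haA)

lemma affineForm_mem_card_nsmul (hne : b₁ ≠ b₂)
    (hs : ∀ a ∈ s, a = b₁ ∨ a = b₂ ∨ a ∈ A) :
    affineForm m b₁ b₂ s ∈ s.card • letterForms m (b₁ + m * b₂) A := by
  induction s using Multiset.induction_on with
  | empty => simp [affineForm, weight]
  | cons a s ih =>
    rw [Multiset.forall_mem_cons] at hs
    rw [affineForm_cons, Multiset.card_cons, succ_nsmul']
    exact Finset.add_mem_add (affineForm_singleton_mem hne hs.1) (ih hs.2)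

lemma affineForm_mem_newForms_add (hne : b₁ ≠ b₂) (hs : ∀ a ∈ s, a = b₁ ∨ a = b₂ ∨ a ∈ A)
    {k : ℕ} (hcard : s.card = k + 1) (hw : weight m b₁ b₂ s ≠ 0) :
    affineForm m b₁ b₂ s ∈
      newForms m (b₁ + m * b₂) + k • letterForms m (b₁ + m * b₂) A := by
  have peel {b : ℤ} (hb : b ∈ s) (hbF : affineForm m b₁ b₂ {b} ∈ newForms m (b₁ + m * b₂)) :
      affineForm m b₁ b₂ s ∈
        newForms m (b₁ + m * b₂) + k • letterForms m (b₁ + m * b₂) A := by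
    obtain ⟨t, rfl⟩ := Multiset.exists_cons_of_mem hb
    obtain rfl : t.card = k := by simpa using hcard
    rw [affineForm_cons]
    exact Finset.add_mem_add hbF
      (affineForm_mem_card_nsmul hne fun a ha ↦ hs a (Multiset.mem_cons_of_mem ha))
  by_cases h₁ : b₁ ∈ s
  · exact peel h₁ (affineForm_singleton_left_mem hne)
  by_cases h₂ : b₂ ∈ s
  · exact peel h₂ (affineForm_singleton_right_mem hne)
  exact absurd (weight_eq_zero_of_notMem h₁ h₂) hw

lemma weight_eq_fst_of_affine_ne (hne : b₁ ≠ b₂) (hs : ∀ a ∈ s, a = b₁ ∨ a = b₂ ∨ a ∈ A)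
    {k : ℕ} (hcard : s.card = k + 1) (hs₀ : weight m b₁ b₂ s ≠ 0) {w : ℤ × ℤ}
    (hw : w.1 * -b₂ + w.2 = s.sum)
    (hsep : ∀ v ∈ newForms m (b₁ + m * b₂) + k • letterForms m (b₁ + m * b₂) A,
      v.1 ≠ w.1 → v.1 * -b₂ + v.2 ≠ w.1 * -b₂ + w.2) :
    weight m b₁ b₂ s = w.1 := by
  by_contra h
  exact hsep _ (affineForm_mem_newForms_add hne hs hcard hs₀) h (affineForm_eval.trans hw.symm)

lemma ne_and_notMem_of_affine_ne (hm : m ≠ 0) {Z : Finset ℤ}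
    (hsep : ∀ v ∈ newForms m (b₁ + m * b₂),
      ∀ w ∈ letterForms m (b₁ + m * b₂) A ∪ Z.image (Prod.mk 0),
        v.1 ≠ w.1 → v.1 * -b₂ + v.2 ≠ w.1 * -b₂ + w.2) :
    b₁ ≠ b₂ ∧ b₁ ∉ (A ∪ Z : Set ℤ) ∧ b₂ ∉ (A ∪ Z : Set ℤ) := by
  have hleft : ((m : ℤ), b₁ + m * b₂) ∈ newForms m (b₁ + m * b₂) := Finset.mem_insert_self _ _
  have hright : ((-1 : ℤ), (0 : ℤ)) ∈ newForms m (b₁ + m * b₂) :=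
    Finset.mem_insert_of_mem (Finset.mem_singleton_self _)
  have hold {z : ℤ} (hz : z ∈ (A ∪ Z : Set ℤ)) :
      ((0 : ℤ), z) ∈ letterForms m (b₁ + m * b₂) A ∪ Z.image (Prod.mk 0) :=
    hz.elim (fun hz ↦ Finset.mem_union_left _
        (mk_zero_mem_letterForms (Finset.mem_insert_of_mem (Finset.mem_coe.1 hz))))
      fun hz ↦ Finset.mem_union_right _ (Finset.mem_image_of_mem _ (Finset.mem_coe.1 hz))
  refine ⟨fun h ↦ ?_, fun h ↦ ?_, fun h ↦ ?_⟩
  · exact hsep _ hleft _ (Finset.mem_union_left _ (Finset.mem_union_left _ hright)) (by simp)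
      (by simp [h])
  · exact hsep _ hleft _ (hold h) (by simpa using hm) (by simp)
  · exact hsep _ hright _ (hold h) (by simp) (by simp)

lemma isGenericPair_of_affine_ne (hm : m ≠ 0) {Z : Finset ℤ} (hu : b₁ + m * b₂ = u)
    (hsep : ∀ v ∈ newForms m u + m • letterForms m u A,
      ∀ w ∈ (m + 1) • letterForms m u A ∪ Z.image (Prod.mk 0),
        v.1 ≠ w.1 → v.1 * -b₂ + v.2 ≠ w.1 * -b₂ + w.2) :
    IsGenericPair m A Z b₁ b₂ := by
  subst hu
  obtain ⟨hne, hleft, hright⟩ := ne_and_notMem_of_affine_ne (A := A) (Z := Z) hm fun v hv w hw ↦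
    hsep v (newForms_subset_add_nsmul m hv) w
      (Finset.union_subset_union_left (letterForms_subset_nsmul m.succ_ne_zero) hw)
  refine ⟨hne, hleft, hright, fun {n s t} hs ht ↦ ?_, fun {n s} hn hs ↦ ?_⟩
  · have weight_eq {s t : Multiset ℤ}
        (hs : s ∈ reprs (m + 1) (insert b₁ (insert b₂ (A : Set ℤ))) n)
        (ht : t ∈ reprs (m + 1) (insert b₁ (insert b₂ (A : Set ℤ))) n)
        (hs₀ : weight m b₁ b₂ s ≠ 0) : weight m b₁ b₂ s = weight m b₁ b₂ t :=
      weight_eq_fst_of_affine_ne hne hs.1 hs.2.1 hs₀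
        (affineForm_eval.trans (ht.2.2.trans hs.2.2.symm)) fun v hv ↦ hsep v hv _
          (Finset.mem_union_left _ (ht.2.1 ▸ affineForm_mem_card_nsmul hne ht.1))
    by_contra h
    by_cases hs₀ : weight m b₁ b₂ s = 0
    · exact h (weight_eq ht hs (hs₀ ▸ Ne.symm h)).symm
    · exact h (weight_eq hs ht hs₀)
  · by_contra hs₀
    exact hs₀ (weight_eq_fst_of_affine_ne hne hs.1 hs.2.1 hs₀ (w := (0, n)) (by simp [hs.2.2])
      fun v hv ↦ hsep v hv _ (Finset.mem_union_right _ (Finset.mem_image_of_mem _ hn)))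

lemma exists_isGenericPair (hm : m ≠ 0) (A Z : Finset ℤ) (u : ℤ) :
    ∃ c : ℕ, c ≤ 2 * (A.card + 3) ^ m * ((A.card + 3) ^ (m + 1) + Z.card) ∧
      IsGenericPair m A Z (m * c + u) (-c) := by
  have hpow (k : ℕ) : (k • letterForms m u A).card ≤ (A.card + 3) ^ k :=
    Finset.card_nsmul_le.trans (Nat.pow_le_pow_left card_letterForms_le k)
  obtain ⟨c, hc, hsep⟩ := exists_nat_forall_affine_ne (newForms m u + m • letterForms m u A)
    ((m + 1) • letterForms m u A ∪ Z.image (Prod.mk 0))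
  refine ⟨c, hc.trans (Nat.mul_le_mul ?_ ?_), isGenericPair_of_affine_ne (u := u) hm (by ring) ?_⟩
  · exact Finset.card_add_le.trans (Nat.mul_le_mul Finset.card_le_two (hpow m))
  · exact (Finset.card_union_le _ _).trans (add_le_add (hpow (m + 1)) Finset.card_image_le)
  · simpa only [neg_neg] using hsep

lemma exists_nat_encard_reprs_lt (h : ℕ) {f : ℤ → ℕ∞} (A : Finset ℤ) {Z : Finset ℤ}
    (hZ : ∀ n, f n = 0 → n ∈ Z) :
    ∃ u : ℕ, u ≤ A.card ^ h + Z.card ∧ (reprs h (A : Set ℤ) u).encard < f u := by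
  have hlt : (h • A ∪ Z).card <
      ((Finset.range (A.card ^ h + Z.card + 1)).image (Nat.cast : ℕ → ℤ)).card := by
    rw [Finset.card_image_of_injective _ Nat.cast_injective, Finset.card_range, Nat.lt_succ_iff]
    exact (Finset.card_union_le _ _).trans (Nat.add_le_add_right Finset.card_nsmul_le _)
  obtain ⟨n, hn, hnot⟩ := Finset.exists_mem_notMem_of_card_lt_card hlt
  obtain ⟨u, hu, rfl⟩ := Finset.mem_image.1 hn
  have hempty : reprs h (A : Set ℤ) u = ∅ := by
    refine Set.eq_empty_of_forall_notMem fun s hs ↦ hnot (Finset.mem_union_left _ ?_)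
    exact hs.2.2 ▸ hs.2.1 ▸ sum_mem_card_nsmul hs.1
  refine ⟨u, Nat.lt_succ_iff.1 (Finset.mem_range.1 hu), ?_⟩
  rw [hempty, Set.encard_empty, pos_iff_ne_zero]
  exact fun h₀ ↦ hnot (Finset.mem_union_right _ (hZ _ h₀))

end Genericity

section Construction

/-- The constant in the bound `growthConst m z * k ^ (2 * m + 1)` for the absolute values of the
elements chosen up to stage `k`, where `z` is the number of forbidden sums. -/
def growthConst (m z : ℕ) : ℕ := 2 * (m + 1) * (z + 2) * 3 ^ (2 * m + 1)

/-- The invariant of the construction: `A` is a `B_m`-set of `2 * k` elements of controlled size,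
none of its representation numbers exceeds the prescribed one, and it avoids the sequence `x`. -/
structure IsStage (m z : ℕ) (f : ℤ → ℕ∞) (x : ℕ → ℤ) (k : ℕ) (A : Finset ℤ) : Prop where
  card_eq : A.card = 2 * k
  abs_le : ∀ a ∈ A, |a| ≤ (growthConst m z * k ^ (2 * m + 1) : ℕ)
  isBSet : IsBSet m (A : Set ℤ)
  encard_reprs_le : ∀ n, (reprs (m + 1) (A : Set ℤ) n).encard ≤ f n
  notMem : ∀ i, x i ∉ A

variable {m z k c : ℕ} {f : ℤ → ℕ∞} {x : ℕ → ℤ} {A Z : Finset ℤ}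

lemma isStage_empty : IsStage m z f x 0 ∅ where
  card_eq := rfl
  abs_le := by simp
  isBSet := by simpa using isBSet_empty
  encard_reprs_le n := by simp [reprs_empty]
  notMem := by simp

lemma le_of_le_genericPair_bound
    (hc : c ≤ 2 * (2 * k + 3) ^ m * ((2 * k + 3) ^ (m + 1) + (z + (k + 1)))) :
    c ≤ 2 * (z + 2) * (3 * (k + 1)) ^ (2 * m + 1) := by
  set P := 3 * (k + 1) with hP
  have hzP : z + (k + 1) ≤ (z + 1) * P ^ (m + 1) :=
    calc z + (k + 1) ≤ (z + 1) * P := by nlinarith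
      _ ≤ (z + 1) * P ^ (m + 1) := Nat.mul_le_mul_left _ (Nat.le_self_pow m.succ_ne_zero P)
  calc c ≤ 2 * (2 * k + 3) ^ m * ((2 * k + 3) ^ (m + 1) + (z + (k + 1))) := hc
    _ ≤ 2 * P ^ m * (P ^ (m + 1) + (z + 1) * P ^ (m + 1)) := by gcongr <;> omega
    _ = 2 * (z + 2) * P ^ (2 * m + 1) := by ring

lemma le_of_le_deficient_bound (hc : c ≤ (2 * k) ^ (m + 1) + z) :
    c ≤ (z + 1) * (3 * (k + 1)) ^ (2 * m + 1) := by
  set P := 3 * (k + 1) with hP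
  have hP₁ : 1 ≤ P ^ (2 * m + 1) := Nat.one_le_pow _ _ (by omega)
  calc c ≤ (2 * k) ^ (m + 1) + z := hc
    _ ≤ P ^ (m + 1) + z * P ^ (2 * m + 1) :=
        add_le_add (Nat.pow_le_pow_left (by rw [hP]; omega) _) (Nat.le_mul_of_pos_right z hP₁)
    _ ≤ P ^ (2 * m + 1) + z * P ^ (2 * m + 1) := by gcongr <;> omega
    _ = (z + 1) * P ^ (2 * m + 1) := by ring

lemma abs_le_growthConst_mul {u : ℤ}
    (hc : c ≤ 2 * (z + 2) * (3 * (k + 1)) ^ (2 * m + 1))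
    (hu : |u| ≤ ((z + 1) * (3 * (k + 1)) ^ (2 * m + 1) : ℕ)) :
    |m * c + u| ≤ (growthConst m z * (k + 1) ^ (2 * m + 1) : ℕ) ∧
      |-(c : ℤ)| ≤ (growthConst m z * (k + 1) ^ (2 * m + 1) : ℕ) := by
  have hconst : growthConst m z * (k + 1) ^ (2 * m + 1) =
      (m + 1) * (2 * (z + 2) * (3 * (k + 1)) ^ (2 * m + 1)) := by
    rw [growthConst, mul_pow]
    ring
  rw [hconst]
  set D := 2 * (z + 2) * (3 * (k + 1)) ^ (2 * m + 1) with hD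
  have huD : |u| ≤ (D : ℤ) := hu.trans (by rw [hD]; gcongr; omega)
  have hcD : (c : ℤ) ≤ D := by exact_mod_cast hc
  have hmc : (m * c : ℤ) ≤ m * D := by gcongr
  constructor
  · calc |m * c + u| ≤ |(m * c : ℤ)| + |u| := abs_add_le _ _
      _ = m * c + |u| := by rw [abs_of_nonneg (by positivity)]
      _ ≤ m * D + D := add_le_add hmc huD
      _ = ((m + 1) * D : ℕ) := by push_cast; ring
  · rw [abs_neg, Nat.abs_cast]
    exact_mod_cast hc.trans (Nat.le_mul_of_pos_left D m.succ_pos)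

lemma ne_of_notMem_image_range
    (hx : ∀ k, (growthConst m z * k ^ (2 * m + 1) : ℕ) < |x k|) {b : ℤ}
    (hb : b ∉ (Finset.range k).image x) (hbk : |b| ≤ (growthConst m z * k ^ (2 * m + 1) : ℕ))
    (i : ℕ) : x i ≠ b := by
  rintro rfl
  have hki : k ≤ i := by
    by_contra hik
    exact hb (Finset.mem_image_of_mem x (Finset.mem_range.2 (not_le.1 hik)))
  refine (hx i).not_ge (hbk.trans (Nat.cast_le.2 ?_))
  gcongr

lemma IsStage.insert_insert (hA : IsStage m z f x k A) (hZ : ∀ n, f n = 0 → n ∈ Z)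
    (hx : ∀ k, (growthConst m z * k ^ (2 * m + 1) : ℕ) < |x k|) {b₁ b₂ : ℤ}
    (hG : IsGenericPair m A (Z ∪ (Finset.range (k + 1)).image x : Finset ℤ) b₁ b₂)
    (hb₁ : |b₁| ≤ (growthConst m z * (k + 1) ^ (2 * m + 1) : ℕ))
    (hb₂ : |b₂| ≤ (growthConst m z * (k + 1) ^ (2 * m + 1) : ℕ))
    (hlt : (reprs (m + 1) (A : Set ℤ) (b₁ + m * b₂)).encard < f (b₁ + m * b₂)) :
    IsStage m z f x (k + 1) (insert b₁ (insert b₂ A)) where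
  card_eq := by
    rw [Finset.card_insert_of_notMem, Finset.card_insert_of_notMem, hA.card_eq]
    · ring
    · exact fun h ↦ hG.right_notMem (Or.inl h)
    · simpa [hG.ne] using fun h ↦ hG.left_notMem (Or.inl h)
  abs_le := by
    simp only [Finset.forall_mem_insert]
    refine ⟨hb₁, hb₂, fun a ha ↦ (hA.abs_le a ha).trans (Nat.cast_le.2 ?_)⟩
    gcongr
    omega
  isBSet := by simpa using hG.isBSet hA.isBSet
  encard_reprs_le := by
    simpa using hG.encard_reprs_le hA.isBSet (fun n hn ↦ Finset.mem_union_left _ (hZ n hn))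
      hA.encard_reprs_le hlt
  notMem i := by
    have h₁ := ne_of_notMem_image_range hx
      (fun h ↦ hG.left_notMem (Or.inr (Finset.mem_union_right _ h))) hb₁ i
    have h₂ := ne_of_notMem_image_range hx
      (fun h ↦ hG.right_notMem (Or.inr (Finset.mem_union_right _ h))) hb₂ i
    simp [h₁, h₂, hA.notMem i]

lemma IsStage.exists_succ_of_lt (hA : IsStage m Z.card f x k A) (hm : m ≠ 0)
    (hZ : ∀ n, f n = 0 → n ∈ Z)
    (hx : ∀ k, (growthConst m Z.card * k ^ (2 * m + 1) : ℕ) < |x k|) {u : ℤ}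
    (hu : |u| ≤ ((Z.card + 1) * (3 * (k + 1)) ^ (2 * m + 1) : ℕ))
    (hlt : (reprs (m + 1) (A : Set ℤ) u).encard < f u) :
    ∃ B, IsStage m Z.card f x (k + 1) B ∧ A ⊆ B ∧
      (reprs (m + 1) (A : Set ℤ) u).encard < (reprs (m + 1) (B : Set ℤ) u).encard := by
  set F := Z ∪ (Finset.range (k + 1)).image x
  have hF : F.card ≤ Z.card + (k + 1) := (Finset.card_union_le _ _).trans
    (Nat.add_le_add_left (Finset.card_image_le.trans (Finset.card_range _).le) _)
  obtain ⟨c, hc, hG⟩ := exists_isGenericPair hm A F u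
  rw [hA.card_eq] at hc
  obtain ⟨hb₁, hb₂⟩ := abs_le_growthConst_mul
    (le_of_le_genericPair_bound (hc.trans (by gcongr))) hu
  have hsum : (m * c + u : ℤ) + m * -c = u := by ring
  have hfin : (reprs (m + 1) (A : Set ℤ) u).Finite :=
    Set.encard_lt_top_iff.1 (hlt.trans_le le_top)
  refine ⟨_, hA.insert_insert hZ hx hG hb₁ hb₂ (by rwa [hsum]),
    (Finset.subset_insert _ _).trans (Finset.subset_insert _ _), ?_⟩
  simpa [hsum] using hG.encard_reprs_lt (by rwa [hsum])

lemma IsStage.exists_succ (hA : IsStage m Z.card f x k A) (hm : m ≠ 0)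
    (hZ : ∀ n, f n = 0 → n ∈ Z)
    (hx : ∀ k, (growthConst m Z.card * k ^ (2 * m + 1) : ℕ) < |x k|) (v : ℤ) :
    ∃ B, IsStage m Z.card f x (k + 1) B ∧ A ⊆ B ∧
      (|v| ≤ k → (reprs (m + 1) (A : Set ℤ) v).encard < f v →
        (reprs (m + 1) (A : Set ℤ) v).encard < (reprs (m + 1) (B : Set ℤ) v).encard) := by
  by_cases hv : |v| ≤ k ∧ (reprs (m + 1) (A : Set ℤ) v).encard < f v
  · have hbound : |v| ≤ ((Z.card + 1) * (3 * (k + 1)) ^ (2 * m + 1) : ℕ) := by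
      refine hv.1.trans (Nat.cast_le.2 ?_)
      calc k ≤ 3 * (k + 1) := by omega
        _ ≤ (3 * (k + 1)) ^ (2 * m + 1) := Nat.le_self_pow (2 * m).succ_ne_zero _
        _ ≤ (Z.card + 1) * (3 * (k + 1)) ^ (2 * m + 1) :=
          Nat.le_mul_of_pos_left _ (Nat.succ_pos _)
    obtain ⟨B, hB, hAB, hlt⟩ := hA.exists_succ_of_lt hm hZ hx hbound hv.2
    exact ⟨B, hB, hAB, fun _ _ ↦ hlt⟩
  · obtain ⟨u, hu, hlt⟩ := exists_nat_encard_reprs_lt (m + 1) A hZ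
    rw [hA.card_eq] at hu
    obtain ⟨B, hB, hAB, -⟩ := hA.exists_succ_of_lt hm hZ hx
      (by simpa only [Nat.abs_cast] using Nat.cast_le.2 (le_of_le_deficient_bound hu)) hlt
    exact ⟨B, hB, hAB, fun h₁ h₂ ↦ absurd ⟨h₁, h₂⟩ hv⟩

open Filter in
lemma exists_seq_isStage (hm : m ≠ 0) (hZ : ∀ n, f n = 0 → n ∈ Z)
    (hx : ∀ k, (growthConst m Z.card * k ^ (2 * m + 1) : ℕ) < |x k|) :
    ∃ S : ℕ → Finset ℤ, Monotone S ∧ (∀ k, IsStage m Z.card f x k (S k)) ∧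
      ∀ n, ∃ᶠ k in atTop, (reprs (m + 1) (S k : Set ℤ) n).encard < f n →
        (reprs (m + 1) (S k : Set ℤ) n).encard <
          (reprs (m + 1) (S (k + 1) : Set ℤ) n).encard := by
  obtain ⟨v, hv⟩ := exists_seq_frequently_eq ℤ
  have hstep : ∀ k A, IsStage m Z.card f x k A → ∃ B, IsStage m Z.card f x (k + 1) B ∧ A ⊆ B ∧
      (|v k| ≤ k → (reprs (m + 1) (A : Set ℤ) (v k)).encard < f (v k) →
        (reprs (m + 1) (A : Set ℤ) (v k)).encard <
          (reprs (m + 1) (B : Set ℤ) (v k)).encard) :=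
    fun k A hA ↦ hA.exists_succ hm hZ hx (v k)
  choose! next hstage hsub hlt using hstep
  set S : ℕ → Finset ℤ := fun k ↦ Nat.rec ∅ next k
  have hS (k : ℕ) : IsStage m Z.card f x k (S k) := by
    induction k with
    | zero => exact isStage_empty
    | succ k ih => exact hstage k _ ih
  refine ⟨S, monotone_nat_of_le_succ fun k ↦ hsub k _ (hS k), hS, fun n ↦ ?_⟩
  refine ((hv n).and_eventually (eventually_ge_atTop n.natAbs)).mono ?_
  rintro k ⟨rfl, hk⟩
  exact hlt k _ (hS k) ((Int.abs_eq_natAbs _).trans_le (Nat.cast_le.2 hk))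

lemma exists_encard_reprs_eq (hm : m ≠ 0) (hZ : ∀ n, f n = 0 → n ∈ Z)
    (hx : ∀ k, (growthConst m Z.card * k ^ (2 * m + 1) : ℕ) < |x k|) :
    ∃ A : Set ℤ, (∀ n, (reprs (m + 1) A n).encard = f n) ∧
      (∀ k : ℕ, ∃ T : Finset ℤ, (T : Set ℤ) ⊆ A ∧ k ≤ T.card ∧
        ∀ a ∈ T, |a| ≤ (growthConst m Z.card * k ^ (2 * m + 1) : ℕ)) ∧
      ∀ i, x i ∉ A := by
  obtain ⟨S, hmono, hS, hlt⟩ := exists_seq_isStage hm hZ hx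
  have hmono_coe : Monotone fun k ↦ (S k : Set ℤ) := fun i j hij ↦ Finset.coe_subset.2 (hmono hij)
  have hmono_reprs (n : ℤ) : Monotone fun k ↦ reprs (m + 1) (S k : Set ℤ) n :=
    fun i j hij ↦ reprs_mono (hmono_coe hij)
  refine ⟨⋃ k, S k, fun n ↦ ?_, fun k ↦ ⟨S k, Set.subset_iUnion_of_subset k subset_rfl, ?_,
    (hS k).abs_le⟩, fun i hi ↦ ?_⟩
  · rw [reprs_iUnion_of_directed hmono_coe.directed_le,
      encard_iUnion_of_directed (hmono_reprs n).directed_le]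
    exact iSup_eq_of_frequently_lt (fun i j hij ↦ Set.encard_le_encard (hmono_reprs n hij))
      (fun k ↦ (hS k).encard_reprs_le n) (hlt n)
  · have := (hS k).card_eq
    omega
  · obtain ⟨k, hk⟩ := Set.mem_iUnion.1 hi
    exact (hS k).notMem i hk

end Construction

section Growth

/-- The counting function of `A` grows at least like a constant multiple of `x ^ e`. -/
def HasGrowth (e : ℝ) (A : Set ℤ) : Prop :=
  ∃ c₀ x₀ : ℝ, 0 < c₀ ∧ ∀ x : ℝ, x₀ ≤ x →
    c₀ * x ^ e ≤ ({a : ℤ | a ∈ A ∧ |(a : ℝ)| ≤ x}.ncard : ℝ)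

lemma finite_setOf_abs_intCast_le (x : ℝ) : {a : ℤ | |(a : ℝ)| ≤ x}.Finite := by
  refine (Set.finite_Icc (-⌊x⌋) ⌊x⌋).subset fun a ha ↦ abs_le.1 (Int.le_floor.2 ?_)
  rw [Int.cast_abs]
  exact ha

open Filter in
lemma HasGrowth.infinite {e : ℝ} {A : Set ℤ} (hA : HasGrowth e A) (he : 0 < e) : A.Infinite := by
  obtain ⟨c₀, x₀, hc₀, hcount⟩ := hA
  intro hfin
  have htop : Tendsto (fun x : ℝ ↦ c₀ * x ^ e) atTop atTop :=
    (tendsto_rpow_atTop he).const_mul_atTop hc₀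
  obtain ⟨x, hx, hx₀⟩ :=
    ((htop.eventually_gt_atTop (A.ncard : ℝ)).and (eventually_ge_atTop x₀)).exists
  have hle : {a : ℤ | a ∈ A ∧ |(a : ℝ)| ≤ x}.ncard ≤ A.ncard :=
    Set.ncard_le_ncard (fun a ha ↦ ha.1) hfin
  exact absurd (hcount x hx₀) (((Nat.cast_le.2 hle).trans_lt hx).not_ge)

lemma hasGrowth_of_exists_finset {C d : ℕ} (hC : C ≠ 0) (hd : d ≠ 0) {A : Set ℤ}
    (hA : ∀ k : ℕ, ∃ T : Finset ℤ, (T : Set ℤ) ⊆ A ∧ k ≤ T.card ∧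
      ∀ a ∈ T, |a| ≤ (C * k ^ d : ℕ)) :
    HasGrowth (1 / d) A := by
  have hC₀ : (0 : ℝ) < C := by positivity
  refine ⟨1 / 2 * (1 / (C : ℝ)) ^ (1 / d : ℝ), C, by positivity, fun x hx ↦ ?_⟩
  have hxC : 1 ≤ 1 / (C : ℝ) * x := by rwa [one_div_mul_eq_div, one_le_div hC₀]
  rw [mul_assoc, ← Real.mul_rpow (by positivity) (hC₀.le.trans hx)]
  set y : ℝ := (1 / (C : ℝ) * x) ^ (1 / d : ℝ) with hy
  have hy₁ : 1 ≤ y := Real.one_le_rpow hxC (by positivity)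
  have hyd : C * y ^ d = x := by
    rw [hy, one_div (d : ℝ), Real.rpow_inv_natCast_pow (by positivity) hd]
    field_simp
  obtain ⟨T, hTA, hcard, hT⟩ := hA ⌊y⌋₊
  have hsub : (T : Set ℤ) ⊆ {a : ℤ | a ∈ A ∧ |(a : ℝ)| ≤ x} := fun a ha ↦ ⟨hTA ha,
    calc |(a : ℝ)| ≤ C * (⌊y⌋₊ : ℝ) ^ d := by exact_mod_cast hT a ha
      _ ≤ C * y ^ d := by gcongr; exact Nat.floor_le (by positivity)
      _ = x := hyd⟩
  have hfin : {a : ℤ | a ∈ A ∧ |(a : ℝ)| ≤ x}.Finite :=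
    (finite_setOf_abs_intCast_le x).subset fun a ha ↦ ha.2
  calc 1 / 2 * y ≤ ⌊y⌋₊ := by
        have h₁ : (1 : ℝ) ≤ ⌊y⌋₊ := by exact_mod_cast (Nat.one_le_floor_iff y).2 hy₁
        linarith [Nat.lt_floor_add_one y]
    _ ≤ T.card := Nat.cast_le.2 hcard
    _ ≤ ({a : ℤ | a ∈ A ∧ |(a : ℝ)| ≤ x}.ncard : ℝ) := by
        rw [← Set.ncard_coe_finset]
        exact Nat.cast_le.2 (Set.ncard_le_ncard hsub hfin)

end Growth

theorem stmt5 (h : ℕ) (hh : 2 ≤ h) (f : ℤ → ℕ∞) (hf : (f ⁻¹' {0}).Finite) :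
    ¬ Set.Countable {A : Set ℤ |
      (∀ n : ℤ, repH h A n = f n) ∧
      ∃ c₀ x₀ : ℝ, 0 < c₀ ∧ ∀ x : ℝ, x₀ ≤ x →
        c₀ * x ^ ((1 : ℝ) / (2 * (h : ℝ) - 1)) ≤
          ({a : ℤ | a ∈ A ∧ |(a : ℝ)| ≤ x}.ncard : ℝ)} := by
  obtain ⟨m, rfl⟩ := Nat.exists_eq_add_of_le' (one_le_two.trans hh)
  have hm : m ≠ 0 := by omega
  have hexp : 2 * ((m + 1 : ℕ) : ℝ) - 1 = (2 * m + 1 : ℕ) := by push_cast; ring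
  simp only [hexp, repH_eq_encard_reprs]
  set Z := hf.toFinset
  have hZ (n : ℤ) (hn : f n = 0) : n ∈ Z := hf.mem_toFinset.2 hn
  have hC : growthConst m Z.card ≠ 0 := by simp [growthConst]
  refine not_countable_of_forall_exists_avoiding
    (F := fun k ↦ {a | |a| ≤ (growthConst m Z.card * k ^ (2 * m + 1) : ℕ)})
    (fun k ↦ (Set.finite_Icc _ _).subset fun a ha ↦ abs_le.1 ha)
    (fun A hA ↦ HasGrowth.infinite hA.2 (by positivity)) fun x hx ↦ ?_
  obtain ⟨A, hA, hT, hxA⟩ := exists_encard_reprs_eq hm hZ fun k ↦ not_le.1 (hx k)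
  exact ⟨A, ⟨hA, hasGrowth_of_exists_finset hC (2 * m).succ_ne_zero hT⟩, hxA⟩
end

section
/- Let h ≥ 2 be an integer and let f : ℤ → ℕ ∪ {∞} be any function such that f⁻¹(0) is finite. Then there exist uncountably many sets A of integers such that the restricted representation function satisfies r̂_{A,h}(n) = f(n) for all integers n, and such that there are constants c_0 > 0 and x_0 with: the number of elements a ∈ A with |a| ≤ x is at least c_0 · x^{1/(2h-1)} for all x ≥ x_0. -/
open scoped BigOperators

/-- The restricted representation function of order `h`: the number (in `ℕ∞`)
of ways to write `n = a₁ + a₂ + ⋯ + a_h` with all `aᵢ ∈ A` and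
`a₁ < a₂ < ⋯ < a_h` (pairwise distinct elements of `A`). -/
noncomputable def repHres (h : ℕ) (A : Set ℤ) (n : ℤ) : ℕ∞ :=
  {a : Fin h → ℤ | (∀ i, a i ∈ A) ∧ StrictMono a ∧ ∑ i, a i = n}.encard

/-!
The set is an increasing union of finite sets, each obtained from the previous one `A` by adjoining
a block of `h` new integers with prescribed sum `u`, where `u` is an integer that does not have
enough representations yet. The elements of the block are dilated by a parameter `y`, with slopes
congruent to the powers of two modulo `2 ^ h - 1`, so that two subset sums of the slopes agree only
for equal subsets or for the empty and the full one. Hence every unwanted coincidence between sums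
of at most `h` elements excludes a single value of `y`, and the block adds a representation of `u`
but otherwise only representations of integers that had none and are allowed one. After `k` blocks
there are `O(k ^ (h - 1) * k ^ h)` values to avoid, so the next block can be chosen of size
`O(k ^ (2 * h - 1))`, which gives the density. As finitely many integers may be forbidden at each
step, the set can also be made to differ from every member of a given countable list.
-/

section

open Finset
open scoped Pointwise

section FiniteRepresentations

variable {G : Type*} [DecidableEq G] [AddCommMonoid G]

/-- The representations of `n` as a sum of `h` distinct elements of the finite set `A`, each encoded
as the `h`-element set of its summands; `#(reps h A n)` is the finite analogue of `repHres`. -/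
def reps (h : ℕ) (A : Finset G) (n : G) : Finset (Finset G) :=
  {B ∈ A.powersetCard h | ∑ b ∈ B, b = n}

lemma mem_reps {h : ℕ} {A B : Finset G} {n : G} :
    B ∈ reps h A n ↔ B ⊆ A ∧ #B = h ∧ ∑ b ∈ B, b = n := by
  simp [reps, mem_powersetCard, and_assoc]

lemma reps_mono (h : ℕ) (n : G) : Monotone fun A : Finset G ↦ reps h A n :=
  fun _ _ hAA' _ hB ↦ mem_reps.2 ⟨(mem_reps.1 hB).1.trans hAA', (mem_reps.1 hB).2⟩

lemma exists_notMem_reps_eq_empty (h : ℕ) (A Z : Finset ℤ) :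
    ∃ u : ℤ, |u| ≤ (#A ^ h + #Z : ℕ) ∧ u ∉ Z ∧ reps h A u = ∅ := by
  let V := (A.powersetCard h).image (fun B ↦ ∑ b ∈ B, b) ∪ Z
  have card_V : #V ≤ #A ^ h + #Z := by
    refine (card_union_le _ _).trans (Nat.add_le_add_right (card_image_le.trans ?_) _)
    exact (card_powersetCard h A).trans_le (Nat.choose_le_pow _ _)
  obtain ⟨u, hu, huV⟩ : ∃ u ∈ Icc (0 : ℤ) #V, u ∉ V :=
    exists_mem_notMem_of_card_lt_card (by simp)
  rw [mem_Icc] at hu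
  refine ⟨u, ?_, fun huZ ↦ huV (mem_union_right _ huZ), ?_⟩
  · rw [abs_of_nonneg hu.1]
    exact hu.2.trans (mod_cast card_V)
  · refine filter_eq_empty_iff.2 fun B hB hsum ↦ huV (mem_union_left _ ?_)
    exact mem_image.2 ⟨B, hB, hsum⟩

lemma encard_iUnion_coe_of_directed {ι α : Type*} [Nonempty ι] {s : ι → Finset α}
    (hs : Directed (· ⊆ ·) s) : (⋃ k, (s k : Set α)).encard = ⨆ k, (#(s k) : ℕ∞) := by
  have hs' : Directed (· ⊆ ·) fun k ↦ (s k : Set α) := hs.mono_comp _ fun _ _ ↦ coe_subset.2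
  refine le_antisymm (ENat.forall_natCast_le_iff_le.1 fun m hm ↦ ?_) (iSup_le fun k ↦ ?_)
  · obtain ⟨t, hts, htm⟩ := Set.exists_subset_encard_eq hm
    lift t to Finset α using Set.finite_of_encard_eq_coe htm
    obtain ⟨k, hk⟩ := hs'.exists_mem_subset_of_finset_subset_biUnion hts
    rw [Set.encard_coe_eq_coe_finsetCard] at htm
    rw [← htm]
    exact (Nat.cast_le.2 (card_le_card (coe_subset.1 hk))).trans
      (le_iSup (fun k ↦ (#(s k) : ℕ∞)) k)
  · rw [← Set.encard_coe_eq_coe_finsetCard]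
    exact Set.encard_le_encard (Set.subset_iUnion (fun k ↦ (s k : Set α)) k)

lemma repHres_eq_encard_finset (h : ℕ) (A : Set ℤ) (n : ℤ) :
    repHres h A n = {B : Finset ℤ | ↑B ⊆ A ∧ #B = h ∧ ∑ b ∈ B, b = n}.encard := by
  have injOn_image : Set.InjOn (fun a : Fin h → ℤ ↦ univ.image a)
      {a | (∀ i, a i ∈ A) ∧ StrictMono a ∧ ∑ i, a i = n} := by
    intro a ha b hb hab
    refine (StrictMono.range_inj ha.2.1 hb.2.1).1 ?_
    simpa using congrArg (fun s : Finset ℤ ↦ (s : Set ℤ)) hab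
  rw [repHres, ← injOn_image.encard_image]
  congr 1
  ext B
  constructor
  · rintro ⟨a, ⟨haA, ha, hsum⟩, rfl⟩
    refine ⟨by simpa [Set.range_subset_iff] using haA, ?_, ?_⟩
    · simp [card_image_of_injective _ ha.injective]
    · rw [sum_image ha.injective.injOn, hsum]
  · rintro ⟨hBA, hB, hsum⟩
    have image_eq : univ.image (B.orderEmbOfFin hB) = B := by simp
    refine ⟨B.orderEmbOfFin hB, ⟨fun i ↦ hBA (B.orderEmbOfFin_mem hB i),
      (B.orderEmbOfFin hB).strictMono, ?_⟩, image_eq⟩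
    calc ∑ i, B.orderEmbOfFin hB i = ∑ b ∈ univ.image (B.orderEmbOfFin hB), b :=
          (sum_image (f := fun b ↦ b) (B.orderEmbOfFin hB).injective.injOn).symm
      _ = n := by rw [image_eq, hsum]

lemma repHres_iUnion_of_directed {ι : Type*} [Nonempty ι] {A : ι → Finset ℤ}
    (hA : Directed (· ⊆ ·) A) (h : ℕ) (n : ℤ) :
    repHres h (⋃ k, (A k : Set ℤ)) n = ⨆ k, (#(reps h (A k) n) : ℕ∞) := by
  have hA' : Directed (· ⊆ ·) fun k ↦ (A k : Set ℤ) := hA.mono_comp _ fun _ _ ↦ coe_subset.2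
  have reps_directed : Directed (· ⊆ ·) fun k ↦ reps h (A k) n :=
    hA.mono_comp (g := fun B ↦ reps h B n) _ fun _ _ hAB ↦ reps_mono h n hAB
  rw [repHres_eq_encard_finset, ← encard_iUnion_coe_of_directed reps_directed]
  congr 1
  ext B
  simp only [Set.mem_ofPred_eq, Set.mem_iUnion, mem_coe, mem_reps, exists_and_right]
  refine and_congr_left fun _ ↦
    ⟨hA'.exists_mem_subset_of_finset_subset_biUnion, fun ⟨k, hk⟩ ↦ ?_⟩
  exact (coe_subset.2 hk).trans (Set.subset_iUnion (fun k ↦ (A k : Set ℤ)) k)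

end FiniteRepresentations

section FreeBlocks

variable {G : Type*} [DecidableEq G] [AddCommMonoid G] {h : ℕ} {A N B C : Finset G}
  {Z : Set G} {f : G → ℕ∞}

/-- The sums of equally many, but fewer than `h`, distinct elements of `A` determine their
summands. This is the weak Sidon property of all orders below `h`. -/
def IsWeakSidonBelow (h : ℕ) (A : Finset G) : Prop :=
  ∀ ⦃X⦄, X ⊆ A → ∀ ⦃Y⦄, Y ⊆ A → #X = #Y → #X < h → ∑ x ∈ X, x = ∑ y ∈ Y, y → X = Y

/-- `N` is a block of `h` new elements which, adjoined to `A`, creates no coincidence between sums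
of at most `h` distinct elements besides those forced by `A` and by the sum of `N` itself, and no
sum of `h` distinct elements in the forbidden set `Z` besides possibly these two kinds. -/
structure IsFreeBlock (h : ℕ) (Z : Set G) (A N : Finset G) : Prop where
  card_eq : #N = h
  disjoint : Disjoint A N
  sdiff_eq_or : ∀ ⦃B⦄, B ⊆ A ∪ N → ∀ ⦃C⦄, C ⊆ A ∪ N → #B = #C → #B ≤ h →
    ∑ b ∈ B, b = ∑ c ∈ C, c → B \ A = C \ A ∨ (B ⊆ A ∧ C = N) ∨ (B = N ∧ C ⊆ A)
  sum_notMem : ∀ ⦃B⦄, B ⊆ A ∪ N → #B = h → ¬B ⊆ A → B ≠ N → ∑ b ∈ B, b ∉ Z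

namespace IsFreeBlock

lemma mono {Z' : Set G} (hN : IsFreeBlock h Z A N) (hZ : Z' ⊆ Z) : IsFreeBlock h Z' A N :=
  { hN with sum_notMem := fun _ hB hcard hBA hBN hBZ ↦ hN.sum_notMem hB hcard hBA hBN (hZ hBZ) }

lemma card_reps_lt_card_reps_union (hN : IsFreeBlock h Z A N) (hh : h ≠ 0) :
    #(reps h A (∑ a ∈ N, a)) < #(reps h (A ∪ N) (∑ a ∈ N, a)) := by
  refine card_lt_card ((ssubset_iff_of_subset (reps_mono h _ subset_union_left)).2 ⟨N, ?_, ?_⟩)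
  · exact mem_reps.2 ⟨subset_union_right, hN.card_eq, rfl⟩
  · intro hNA
    have hN0 : N = ∅ := disjoint_self_iff_empty N |>.1
      (hN.disjoint.mono_left (mem_reps.1 hNA).1)
    exact hh (by rw [← hN.card_eq, hN0, card_empty])

variable [IsCancelAdd G]

lemma eq_or_subset_or_eq (hN : IsFreeBlock h Z A N) (hA : IsWeakSidonBelow h A)
    (hB : B ⊆ A ∪ N) (hC : C ⊆ A ∪ N) (hcard : #B = #C) (hle : #B ≤ h)
    (hsum : ∑ b ∈ B, b = ∑ c ∈ C, c) : B = C ∨ (#B = h ∧ (B ⊆ A ∨ B = N)) := by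
  rcases hN.sdiff_eq_or hB hC hcard hle hsum with hBC | ⟨hBA, rfl⟩ | ⟨rfl, -⟩
  · have card_inter : #(B ∩ A) = #(C ∩ A) := by
      rw [← card_inter_add_card_sdiff B A, ← card_inter_add_card_sdiff C A, hBC] at hcard
      exact Nat.add_right_cancel hcard
    have sum_inter : ∑ b ∈ B ∩ A, b = ∑ c ∈ C ∩ A, c := by
      rw [← sum_inter_add_sum_sdiff B A, ← sum_inter_add_sum_sdiff C A, hBC] at hsum
      exact add_right_cancel hsum
    rcases lt_or_ge #(B ∩ A) h with hlt | hge
    · left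
      have inter_eq := hA inter_subset_right inter_subset_right card_inter hlt sum_inter
      rw [← sdiff_union_inter B A, ← sdiff_union_inter C A, hBC, inter_eq]
    · right
      have inter_eq : B ∩ A = B := eq_of_subset_of_card_le inter_subset_left (hle.trans hge)
      exact ⟨hle.antisymm (inter_eq ▸ hge), Or.inl (inter_eq_left.1 inter_eq)⟩
  · exact Or.inr ⟨hcard.trans hN.card_eq, Or.inl hBA⟩
  · exact Or.inr ⟨hN.card_eq, Or.inr rfl⟩

lemma isWeakSidonBelow_union (hN : IsFreeBlock h Z A N) (hA : IsWeakSidonBelow h A) :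
    IsWeakSidonBelow h (A ∪ N) := fun _ hX _ hY hcard hlt hsum ↦
  (hN.eq_or_subset_or_eq hA hX hY hcard hlt.le hsum).resolve_right fun hX' ↦ hlt.ne hX'.1

lemma card_reps_union_le_one (hN : IsFreeBlock h Z A N) (hA : IsWeakSidonBelow h A)
    (hB : B ⊆ A ∪ N) (hcard : #B = h) (hBA : ¬B ⊆ A) (hBN : B ≠ N) :
    #(reps h (A ∪ N) (∑ b ∈ B, b)) ≤ 1 := by
  refine card_le_one_iff_subset_singleton.2 ⟨B, fun C hC ↦ mem_singleton.2 ?_⟩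
  obtain ⟨hCAN, hCcard, hsum⟩ := mem_reps.1 hC
  exact ((hN.eq_or_subset_or_eq hA hB hCAN (hcard.trans hCcard.symm) hcard.le
    hsum.symm).resolve_right fun hB' ↦ hB'.2.elim hBA hBN).symm

lemma card_reps_union_le (hN : IsFreeBlock h (f ⁻¹' {0}) A N) (hA : IsWeakSidonBelow h A)
    (hf : ∀ n, #(reps h A n) ≤ f n) (hsum : #(reps h A (∑ a ∈ N, a)) < f (∑ a ∈ N, a)) (n : G) :
    #(reps h (A ∪ N) n) ≤ f n := by
  by_cases hmixed : ∃ B ∈ reps h (A ∪ N) n, ¬B ⊆ A ∧ B ≠ N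
  · obtain ⟨B, hB, hBA, hBN⟩ := hmixed
    obtain ⟨hBAN, hcard, rfl⟩ := mem_reps.1 hB
    calc (#(reps h (A ∪ N) (∑ b ∈ B, b)) : ℕ∞) ≤ 1 :=
          mod_cast hN.card_reps_union_le_one hA hBAN hcard hBA hBN
      _ ≤ f (∑ b ∈ B, b) := Order.one_le_iff_ne_zero.2 (hN.sum_notMem hBAN hcard hBA hBN)
  push Not at hmixed
  have mem_reps_of_ne {B : Finset G} (hB : B ∈ reps h (A ∪ N) n) (hBN : B ≠ N) :
      B ∈ reps h A n :=
    mem_reps.2 ⟨not_not.1 fun hBA ↦ hBN (hmixed B hB hBA), (mem_reps.1 hB).2⟩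
  by_cases hn : n = ∑ a ∈ N, a
  · have reps_subset : reps h (A ∪ N) n ⊆ insert N (reps h A n) := fun B hB ↦
      mem_insert.2 (or_iff_not_imp_left.2 (mem_reps_of_ne hB))
    calc (#(reps h (A ∪ N) n) : ℕ∞) ≤ (#(reps h A n) + 1 : ℕ) :=
          mod_cast (card_le_card reps_subset).trans (card_insert_le _ _)
      _ ≤ f n := by
          rw [Nat.cast_add_one, hn]
          exact Order.add_one_le_of_lt hsum
  · have reps_subset : reps h (A ∪ N) n ⊆ reps h A n := fun B hB ↦
      mem_reps_of_ne hB fun hBN ↦ hn (hBN ▸ (mem_reps.1 hB).2.2.symm)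
    exact (Nat.cast_le.2 (card_le_card reps_subset)).trans (hf n)

end IsFreeBlock

end FreeBlocks

section PowersOfTwo

lemma sum_two_pow_le {h : ℕ} {S : Finset ℕ} (hS : S ⊆ range h) : ∑ i ∈ S, 2 ^ i ≤ 2 ^ h - 1 :=
  Nat.le_sub_one_of_lt (Nat.geomSum_lt le_rfl fun _ hi ↦ mem_range.1 (hS hi))

lemma sum_range_two_pow (h : ℕ) : ∑ i ∈ range h, 2 ^ i = 2 ^ h - 1 := by
  simp [Nat.geomSum_eq le_rfl]

lemma eq_empty_and_eq_range_of_modEq {h : ℕ} {S T : Finset ℕ} (hT : T ⊆ range h)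
    (hmod : ∑ i ∈ S, 2 ^ i ≡ ∑ i ∈ T, 2 ^ i [MOD 2 ^ h - 1])
    (hlt : ∑ i ∈ S, 2 ^ i < ∑ i ∈ T, 2 ^ i) : S = ∅ ∧ T = range h := by
  have two_pow_injective := geomSum_injective (n := 2) le_rfl
  have modulus_le : 2 ^ h - 1 ≤ ∑ i ∈ T, 2 ^ i - ∑ i ∈ S, 2 ^ i :=
    Nat.le_of_dvd (Nat.sub_pos_of_lt hlt) ((Nat.modEq_iff_dvd' hlt.le).1 hmod)
  have sum_T_le := sum_two_pow_le hT
  constructor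
  · exact two_pow_injective (by simp only [sum_empty]; omega)
  · exact two_pow_injective (by simp only [sum_range_two_pow]; omega)

lemma eq_or_of_sum_two_pow_modEq {h : ℕ} {S T : Finset ℕ} (hS : S ⊆ range h) (hT : T ⊆ range h)
    (hmod : ∑ i ∈ S, 2 ^ i ≡ ∑ i ∈ T, 2 ^ i [MOD 2 ^ h - 1]) :
    S = T ∨ (S = ∅ ∧ T = range h) ∨ (S = range h ∧ T = ∅) := by
  rcases lt_trichotomy (∑ i ∈ S, 2 ^ i) (∑ i ∈ T, 2 ^ i) with hlt | heq | hgt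
  · exact Or.inr (Or.inl (eq_empty_and_eq_range_of_modEq hT hmod hlt))
  · exact Or.inl (geomSum_injective le_rfl heq)
  · exact Or.inr (Or.inr (eq_empty_and_eq_range_of_modEq hS hmod.symm hgt).symm)

end PowersOfTwo

section Blocks

/-- The coefficient of the dilation parameter in the `i`-th element of a block. The coefficients are
the powers of two, with `2 ^ h - 1` subtracted from the first one to make the total zero; modulo
`2 ^ h - 1` they are still powers of two, so their subset sums are distinct up to `∅ ↔ range h`. -/
def blockSlope (h i : ℕ) : ℤ :=
  2 ^ i - if i = 0 then 2 ^ h - 1 else 0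

/-- The `i`-th element of the block with sum `u` and dilation parameter `y`. -/
def blockElem (h : ℕ) (u y : ℤ) (i : ℕ) : ℤ :=
  blockSlope h i * y + if i = 0 then u else 0

/-- The block `{u - (2 ^ h - 2) * y, 2 * y, 4 * y, …, 2 ^ (h - 1) * y}` with sum `u`. -/
def block (h : ℕ) (u y : ℤ) : Finset ℤ :=
  (range h).image (blockElem h u y)

/-- The sums of at most `m` elements of `A`, possibly shifted by `u`. -/
def shiftedSums (m : ℕ) (A : Finset ℤ) (u : ℤ) : Finset ℤ :=
  {0, u} + m • insert 0 A

/-- Dilating the slopes by `y` creates no coincidence modulo `V` and `W`: two subset sums of the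
slopes with different values, dilated by `y`, do not differ by `w - v` for `v ∈ V` and `w ∈ W`. -/
def SlopesSeparate (h : ℕ) (y : ℤ) (V W : Finset ℤ) : Prop :=
  ∀ ⦃S⦄, S ⊆ range h → ∀ ⦃T⦄, T ⊆ range h → ∑ i ∈ S, blockSlope h i ≠ ∑ i ∈ T, blockSlope h i →
    ∀ v ∈ V, ∀ w ∈ W,
      (∑ i ∈ S, blockSlope h i) * y + v ≠ (∑ i ∈ T, blockSlope h i) * y + w

variable {h : ℕ} {A B V W : Finset ℤ} {S T : Finset ℕ} {u y : ℤ}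

lemma sum_blockSlope (h : ℕ) (S : Finset ℕ) :
    ∑ i ∈ S, blockSlope h i = (∑ i ∈ S, 2 ^ i : ℕ) - if 0 ∈ S then 2 ^ h - 1 else 0 := by
  simp [blockSlope, sum_sub_distrib]

lemma sum_range_blockSlope (h : ℕ) : ∑ i ∈ range h, blockSlope h i = 0 := by
  rcases Nat.eq_zero_or_pos h with rfl | hh
  · simp
  · rw [sum_blockSlope, sum_range_two_pow, if_pos (mem_range.2 hh)]
    simp [Nat.one_le_two_pow]

lemma sum_blockSlope_modEq (h : ℕ) (S : Finset ℕ) :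
    ∑ i ∈ S, blockSlope h i ≡ (∑ i ∈ S, 2 ^ i : ℕ) [ZMOD (2 ^ h - 1 : ℕ)] := by
  rw [sum_blockSlope, Int.modEq_iff_dvd]
  split_ifs <;> simp [Nat.one_le_two_pow]

lemma eq_or_of_sum_blockSlope_eq (hS : S ⊆ range h) (hT : T ⊆ range h)
    (heq : ∑ i ∈ S, blockSlope h i = ∑ i ∈ T, blockSlope h i) :
    S = T ∨ (S = ∅ ∧ T = range h) ∨ (S = range h ∧ T = ∅) := by
  refine eq_or_of_sum_two_pow_modEq hS hT (Int.natCast_modEq_iff.1 ?_)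
  exact (sum_blockSlope_modEq h S).symm.trans (heq ▸ sum_blockSlope_modEq h T)

lemma abs_blockSlope_le {i : ℕ} (hi : i < h) : |blockSlope h i| ≤ 2 ^ h := by
  have one_le : (1 : ℤ) ≤ 2 ^ i := one_le_pow₀ one_le_two
  have two_pow_le : (2 : ℤ) ^ i ≤ 2 ^ h := pow_le_pow_right₀ one_le_two hi.le
  rw [blockSlope, abs_le]
  split_ifs <;> constructor <;> linarith

lemma sum_blockElem (h : ℕ) (u y : ℤ) (S : Finset ℕ) :
    ∑ i ∈ S, blockElem h u y i = (∑ i ∈ S, blockSlope h i) * y + if 0 ∈ S then u else 0 := by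
  simp [blockElem, sum_add_distrib, sum_mul]

lemma abs_le_of_mem_block (hy : 0 ≤ y) {a : ℤ} (ha : a ∈ block h u y) :
    |a| ≤ 2 ^ h * y + |u| := by
  obtain ⟨i, hi, rfl⟩ := mem_image.1 ha
  calc |blockElem h u y i| ≤ |blockSlope h i * y| + |if i = 0 then u else 0| := abs_add_le _ _
    _ = |blockSlope h i| * y + |if i = 0 then u else 0| := by rw [abs_mul, abs_of_nonneg hy]
    _ ≤ 2 ^ h * y + |u| := by
      refine add_le_add ?_ (by split_ifs <;> simp)
      exact mul_le_mul_of_nonneg_right (abs_blockSlope_le (mem_range.1 hi)) hy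

lemma sum_mem_nsmul {M : Type*} [DecidableEq M] [AddCommMonoid M] {X A : Finset M} (hX : X ⊆ A) :
    ∑ x ∈ X, x ∈ #X • A := by
  induction X using Finset.induction_on with
  | empty => simp
  | insert a X ha ih =>
    rw [insert_subset_iff] at hX
    rw [sum_insert ha, card_insert_of_notMem ha, succ_nsmul']
    exact add_mem_add hX.1 (ih hX.2)

lemma add_sum_mem_shiftedSums {m : ℕ} {X : Finset ℤ} (p : Prop) [Decidable p] (hX : X ⊆ A)
    (hm : #X ≤ m) : (if p then u else 0) + ∑ x ∈ X, x ∈ shiftedSums m A u := by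
  refine add_mem_add (by split_ifs <;> simp) ?_
  exact nsmul_subset_nsmul_right (mem_insert_self 0 A) hm
    (sum_mem_nsmul (hX.trans (subset_insert 0 A)))

lemma card_shiftedSums_le (m : ℕ) (A : Finset ℤ) (u : ℤ) :
    #(shiftedSums m A u) ≤ 2 * (#A + 1) ^ m :=
  calc #(shiftedSums m A u) ≤ #{0, u} * #(m • insert 0 A) := card_add_le
    _ ≤ 2 * #(insert 0 A) ^ m := Nat.mul_le_mul card_le_two card_nsmul_le
    _ ≤ 2 * (#A + 1) ^ m := by gcongr; exact card_insert_le 0 A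

lemma exists_mul_ne (Q : Finset (ℤ × ℤ)) :
    ∃ y ∈ Icc (1 : ℤ) (#Q + 1), ∀ q ∈ Q, q.1 ≠ 0 → q.1 * y ≠ q.2 := by
  obtain ⟨y, hy, hyQ⟩ : ∃ y ∈ Icc (1 : ℤ) (#Q + 1), y ∉ Q.image fun q ↦ q.2 / q.1 :=
    exists_mem_notMem_of_card_lt_card (card_image_le.trans_lt (by simp))
  refine ⟨y, hy, fun q hq hq0 hqy ↦ hyQ (mem_image.2 ⟨q, hq, ?_⟩)⟩
  rw [← hqy, Int.mul_ediv_cancel_left _ hq0]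

lemma exists_slopesSeparate (h : ℕ) (V W : Finset ℤ) :
    ∃ y ∈ Icc (1 : ℤ) ((2 ^ h) ^ 2 * #V * #W + 1 : ℕ), SlopesSeparate h y V W := by
  let P := (range h).powerset ×ˢ (range h).powerset ×ˢ V ×ˢ W
  let coincidence : Finset ℕ × Finset ℕ × ℤ × ℤ → ℤ × ℤ := fun (S, T, v, w) ↦
    (∑ i ∈ S, blockSlope h i - ∑ i ∈ T, blockSlope h i, w - v)
  obtain ⟨y, hy, hyP⟩ := exists_mul_ne (P.image coincidence)
  have card_P : #P = (2 ^ h) ^ 2 * #V * #W := by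
    simp only [P, card_product, card_powerset, card_range]
    ring
  have card_image : #(P.image coincidence) ≤ (2 ^ h) ^ 2 * #V * #W := card_image_le.trans card_P.le
  refine ⟨y, Icc_subset_Icc_right (mod_cast Nat.succ_le_succ card_image) hy, ?_⟩
  intro S hS T hT hne v hv w hw heq
  refine hyP (coincidence (S, T, v, w)) (mem_image_of_mem _ ?_) (sub_ne_zero.2 hne) ?_
  · simp only [P, mem_product, mem_powerset]
    exact ⟨hS, hT, hv, hw⟩
  · simp only [coincidence]
    linear_combination heq

lemma sum_blockSlope_ne_zero (hS : S ⊆ range h) (hS₀ : S.Nonempty) (hSh : S ≠ range h) :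
    ∑ i ∈ S, blockSlope h i ≠ 0 := fun hsum ↦ by
  rcases eq_or_of_sum_blockSlope_eq hS (empty_subset _) (hsum.trans sum_empty.symm) with
    rfl | ⟨rfl, -⟩ | ⟨rfl, -⟩
  exacts [not_nonempty_empty hS₀, not_nonempty_empty hS₀, hSh rfl]

lemma SlopesSeparate.injOn_blockElem {m n : ℕ}
    (hsep : SlopesSeparate h y (shiftedSums m A u) (shiftedSums n A u)) :
    Set.InjOn (blockElem h u y) (range h) := by
  intro i hi j hj hij
  by_contra hne
  have slope_ne : ∑ l ∈ {i}, blockSlope h l ≠ ∑ l ∈ {j}, blockSlope h l := fun heq ↦ by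
    rcases eq_or_of_sum_blockSlope_eq (singleton_subset_iff.2 hi) (singleton_subset_iff.2 hj) heq
      with hS | ⟨hS, -⟩ | ⟨-, hS⟩
    exacts [hne (singleton_injective hS), singleton_ne_empty i hS, singleton_ne_empty j hS]
  refine hsep (singleton_subset_iff.2 hi) (singleton_subset_iff.2 hj) slope_ne
    _ (add_sum_mem_shiftedSums (0 ∈ ({i} : Finset ℕ)) (empty_subset A) (Nat.zero_le _))
    _ (add_sum_mem_shiftedSums (0 ∈ ({j} : Finset ℕ)) (empty_subset A) (Nat.zero_le _)) ?_
  rwa [sum_empty, add_zero, add_zero, ← sum_blockElem, ← sum_blockElem, sum_singleton,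
    sum_singleton]

lemma SlopesSeparate.disjoint_block {m : ℕ} (hh : 2 ≤ h)
    (hsep : SlopesSeparate h y (shiftedSums m A u) W) : Disjoint (block h u y) W := by
  refine disjoint_left.2 fun a ha haW ↦ ?_
  obtain ⟨i, hi, rfl⟩ := mem_image.1 ha
  have slope_ne : ∑ l ∈ {i}, blockSlope h l ≠ ∑ l ∈ ∅, blockSlope h l := by
    refine sum_blockSlope_ne_zero (singleton_subset_iff.2 hi) (singleton_nonempty i) fun hS ↦ ?_
    have := congrArg card hS
    simp only [card_singleton, card_range] at this
    omega
  refine hsep (singleton_subset_iff.2 hi) (empty_subset _) slope_ne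
    _ (add_sum_mem_shiftedSums (0 ∈ ({i} : Finset ℕ)) (empty_subset A) (Nat.zero_le _)) _ haW ?_
  rw [sum_empty, add_zero, ← sum_blockElem, sum_singleton, sum_empty, zero_mul, zero_add]

lemma card_block (hinj : Set.InjOn (blockElem h u y) (range h)) : #(block h u y) = h := by
  rw [block, card_image_of_injOn hinj, card_range]

lemma sum_block (hh : 0 < h) (hinj : Set.InjOn (blockElem h u y) (range h)) :
    ∑ a ∈ block h u y, a = u := by
  rw [block, sum_image hinj, sum_blockElem, sum_range_blockSlope, if_pos (mem_range.2 hh),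
    zero_mul, zero_add]

lemma exists_index_of_subset_union_block (hinj : Set.InjOn (blockElem h u y) (range h))
    (hB : B ⊆ A ∪ block h u y) :
    ∃ S ⊆ range h, S.image (blockElem h u y) = B \ A ∧ #B = #S + #(B ∩ A) ∧
      ∑ b ∈ B, b = (∑ i ∈ S, blockSlope h i) * y +
        ((if 0 ∈ S then u else 0) + ∑ b ∈ B ∩ A, b) := by
  obtain ⟨S, hS, hSB⟩ := subset_image_iff.1 (sdiff_le_iff.2 hB)
  have hS' : S ⊆ range h := coe_subset.1 hS
  refine ⟨S, hS', hSB, ?_, ?_⟩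
  · rw [← card_sdiff_add_card_inter B A, ← hSB, card_image_of_injOn (hinj.mono hS)]
  · rw [← sum_inter_add_sum_sdiff B A, ← hSB, sum_image (hinj.mono hS), sum_blockElem]
    ring

lemma subset_of_image_blockElem_eq (hBS : S.image (blockElem h u y) = B \ A) (hS : S = ∅) :
    B ⊆ A := by
  rwa [hS, image_empty, eq_comm, sdiff_eq_empty_iff_subset] at hBS

lemma eq_block_of_image_blockElem_eq (hBS : S.image (blockElem h u y) = B \ A)
    (hcard : #B = #S + #(B ∩ A)) (hle : #B ≤ h) (hS : S = range h) : B = block h u y := by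
  have inter_eq : B ∩ A = ∅ := by
    rw [hS, card_range] at hcard
    exact card_eq_zero.1 (by omega)
  rw [← sdiff_union_inter B A, inter_eq, union_empty, ← hBS, hS, block]

lemma SlopesSeparate.sdiff_eq_or {C : Finset ℤ}
    (hsep : SlopesSeparate h y (shiftedSums (h - 1) A u) (shiftedSums h A u))
    (hB : B ⊆ A ∪ block h u y) (hC : C ⊆ A ∪ block h u y) (hcard : #B = #C) (hle : #B ≤ h)
    (hsum : ∑ b ∈ B, b = ∑ c ∈ C, c) :
    B \ A = C \ A ∨ (B ⊆ A ∧ C = block h u y) ∨ (B = block h u y ∧ C ⊆ A) := by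
  obtain ⟨S, hS, hBS, hBcard, hBsum⟩ := exists_index_of_subset_union_block hsep.injOn_blockElem hB
  obtain ⟨T, hT, hCT, hCcard, hCsum⟩ := exists_index_of_subset_union_block hsep.injOn_blockElem hC
  have slope_eq : ∑ i ∈ S, blockSlope h i = ∑ i ∈ T, blockSlope h i := by
    by_contra hne
    rcases S.eq_empty_or_nonempty with rfl | hS₀
    · have hT₀ : T.Nonempty := nonempty_iff_ne_empty.2 fun hT₀ ↦ hne (by rw [hT₀])
      have := hT₀.card_pos
      exact hsep hT hS (Ne.symm hne) _ (add_sum_mem_shiftedSums _ inter_subset_right (by omega))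
        _ (add_sum_mem_shiftedSums _ inter_subset_right (by omega))
        (hCsum.symm.trans (hsum.symm.trans hBsum))
    · have := hS₀.card_pos
      exact hsep hS hT hne _ (add_sum_mem_shiftedSums _ inter_subset_right (by omega))
        _ (add_sum_mem_shiftedSums _ inter_subset_right (by omega))
        (hBsum.symm.trans (hsum.trans hCsum))
  rcases eq_or_of_sum_blockSlope_eq hS hT slope_eq with rfl | ⟨hS, hT⟩ | ⟨hS, hT⟩
  · exact Or.inl (hBS.symm.trans hCT)
  · exact Or.inr (Or.inl ⟨subset_of_image_blockElem_eq hBS hS,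
      eq_block_of_image_blockElem_eq hCT hCcard (hcard ▸ hle) hT⟩)
  · exact Or.inr (Or.inr ⟨eq_block_of_image_blockElem_eq hBS hBcard hle hS,
      subset_of_image_blockElem_eq hCT hT⟩)

lemma SlopesSeparate.sum_notMem (hsep : SlopesSeparate h y (shiftedSums (h - 1) A u) W)
    (hinj : Set.InjOn (blockElem h u y) (range h)) (hB : B ⊆ A ∪ block h u y) (hle : #B ≤ h)
    (hBA : ¬B ⊆ A) (hBN : B ≠ block h u y) : ∑ b ∈ B, b ∉ W := fun hBW ↦ by
  obtain ⟨S, hS, hBS, hBcard, hBsum⟩ := exists_index_of_subset_union_block hinj hB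
  have hS₀ : S.Nonempty :=
    nonempty_iff_ne_empty.2 fun hS₀ ↦ hBA (subset_of_image_blockElem_eq hBS hS₀)
  have hSh : S ≠ range h := fun hSh ↦ hBN (eq_block_of_image_blockElem_eq hBS hBcard hle hSh)
  have card_inter_le : #(B ∩ A) ≤ h - 1 := by have := hS₀.card_pos; omega
  refine hsep hS (empty_subset _) (sum_blockSlope_ne_zero hS hS₀ hSh)
    _ (add_sum_mem_shiftedSums (0 ∈ S) inter_subset_right card_inter_le) _ hBW ?_
  rw [← hBsum, sum_empty, zero_mul, zero_add]

lemma SlopesSeparate.mono_right {W' : Finset ℤ} (hsep : SlopesSeparate h y V W) (hW : W' ⊆ W) :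
    SlopesSeparate h y V W' :=
  fun _ hS _ hT hne v hv w hw ↦ hsep hS hT hne v hv w (hW hw)

lemma subset_shiftedSums {m : ℕ} (hm : 1 ≤ m) : A ⊆ shiftedSums m A u := fun a ha ↦ by
  simpa using add_sum_mem_shiftedSums (u := u) False (singleton_subset_iff.2 ha)
    ((card_singleton a).trans_le hm)

lemma SlopesSeparate.isFreeBlock_block (hh : 2 ≤ h)
    (hsep : SlopesSeparate h y (shiftedSums (h - 1) A u) W) (hW : shiftedSums h A u ⊆ W) :
    IsFreeBlock h W A (block h u y) where
  card_eq := card_block (hsep.mono_right hW).injOn_blockElem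
  disjoint := ((hsep.mono_right hW).disjoint_block hh).symm.mono_left
    (subset_shiftedSums (one_le_two.trans hh))
  sdiff_eq_or _ hB _ hC := (hsep.mono_right hW).sdiff_eq_or hB hC
  sum_notMem _ hB hcard :=
    hsep.sum_notMem (hsep.mono_right hW).injOn_blockElem hB hcard.le

/-- A bound on the dilation parameter of a free block: one more than the number of parameters that
can fail. Here `a` is the number of elements already chosen, plus one, and `m` the number of
forbidden integers. -/
def dilationBound (h a m : ℕ) : ℕ :=
  (2 ^ h) ^ 2 * (2 * a ^ (h - 1)) * (2 * a ^ h + m) + 1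

lemma dilationBound_le {a b m n K : ℕ} (hK : 1 ≤ K) (ha : a ≤ b * K) (hm : m ≤ n * K)
    (hh : 1 ≤ h) : dilationBound h a m ≤ dilationBound h b n * K ^ (2 * h - 1) := by
  have le_pow : K ≤ K ^ h := Nat.le_self_pow (by omega) K
  have one_le_pow : 1 ≤ K ^ (2 * h - 1) := Nat.one_le_pow _ _ hK
  have pow_mul_pow : K ^ (h - 1) * K ^ h = K ^ (2 * h - 1) := by
    rw [← pow_add]
    congr 1
    omega
  calc dilationBound h a m
    _ ≤ (2 ^ h) ^ 2 * (2 * (b * K) ^ (h - 1)) * (2 * (b * K) ^ h + n * K ^ h)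
          + K ^ (2 * h - 1) := by
        rw [dilationBound]
        gcongr
        exact hm.trans (Nat.mul_le_mul_left n le_pow)
    _ = dilationBound h b n * K ^ (2 * h - 1) := by
        rw [dilationBound, ← pow_mul_pow, mul_pow, mul_pow]
        ring

lemma exists_isFreeBlock (hh : 2 ≤ h) (A F Z : Finset ℤ) (u : ℤ) :
    ∃ N : Finset ℤ, IsFreeBlock h Z A N ∧ Disjoint N F ∧ ∑ a ∈ N, a = u ∧
      ∀ a ∈ N, |a| ≤ 2 ^ h * (dilationBound h (#A + 1) (#Z + #F) : ℤ) + |u| := by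
  let W := shiftedSums h A u ∪ (Z ∪ F)
  obtain ⟨y, hy, hsep⟩ := exists_slopesSeparate h (shiftedSums (h - 1) A u) W
  rw [mem_Icc] at hy
  have hW : shiftedSums h A u ⊆ W := subset_union_left
  have hZF : Z ∪ F ⊆ W := subset_union_right
  have card_W : #W ≤ 2 * (#A + 1) ^ h + (#Z + #F) :=
    (card_union_le _ _).trans (Nat.add_le_add (card_shiftedSums_le h A u) (card_union_le Z F))
  have y_le : y ≤ dilationBound h (#A + 1) (#Z + #F) := by
    refine hy.2.trans (Nat.cast_le.2 (Nat.succ_le_succ ?_))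
    exact Nat.mul_le_mul (Nat.mul_le_mul_left _ (card_shiftedSums_le _ A u)) card_W
  refine ⟨block h u y, ?_, ?_, ?_, fun a ha ↦ ?_⟩
  · exact (hsep.isFreeBlock_block hh hW).mono (coe_subset.2 (subset_union_left.trans hZF))
  · exact (hsep.disjoint_block hh).mono_right (subset_union_right.trans hZF)
  · exact sum_block (by omega) (hsep.mono_right hW).injOn_blockElem
  · refine (abs_le_of_mem_block (by omega) ha).trans ?_
    gcongr

end Blocks


section Density

lemma finite_setOf_mem_and_abs_le (A : Set ℤ) (x : ℝ) :
    {a : ℤ | a ∈ A ∧ |(a : ℝ)| ≤ x}.Finite := by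
  refine (Set.finite_Icc (-⌊x⌋) ⌊x⌋).subset fun a ha ↦ abs_le.1 (Int.le_floor.2 ?_)
  rw [Int.cast_abs]
  exact ha.2

lemma exists_mul_rpow_le_ncard {A : Set ℤ} {s : ℕ → Finset ℤ} {c m : ℕ} (hc : 0 < c) (hm : m ≠ 0)
    (hsA : ∀ k, ↑(s k) ⊆ A) (hcard : ∀ k, k ≤ #(s k))
    (habs : ∀ k, ∀ a ∈ s k, |a| ≤ (c * k ^ m : ℕ)) :
    ∃ c₀ x₀ : ℝ, 0 < c₀ ∧ ∀ x, x₀ ≤ x →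
      c₀ * x ^ ((1 : ℝ) / m) ≤ ({a : ℤ | a ∈ A ∧ |(a : ℝ)| ≤ x}.ncard : ℝ) := by
  refine ⟨2⁻¹ * ((c : ℝ) ^ ((1 : ℝ) / m))⁻¹, c, by positivity, fun x hx ↦ ?_⟩
  have hx₀ : 0 ≤ x := c.cast_nonneg.trans hx
  set z : ℝ := (x / c) ^ ((1 : ℝ) / m) with hz
  have one_le_z : 1 ≤ z := Real.one_le_rpow (by rwa [one_le_div₀ (by positivity)]) (by positivity)
  have z_pow : c * z ^ m = x := by
    rw [hz, one_div, Real.rpow_inv_natCast_pow (by positivity) hm]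
    field_simp
  have subset_ball : (s ⌊z⌋₊ : Set ℤ) ⊆ {a : ℤ | a ∈ A ∧ |(a : ℝ)| ≤ x} := fun a ha ↦ by
    refine ⟨hsA _ ha, ?_⟩
    calc |(a : ℝ)| ≤ c * (⌊z⌋₊ : ℝ) ^ m := mod_cast habs _ a ha
      _ ≤ c * z ^ m := by gcongr; exact Nat.floor_le (by positivity)
      _ = x := z_pow
  have floor_le : ⌊z⌋₊ ≤ {a : ℤ | a ∈ A ∧ |(a : ℝ)| ≤ x}.ncard := by
    refine (hcard _).trans ?_
    rw [← Set.ncard_coe_finset]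
    exact Set.ncard_le_ncard subset_ball (finite_setOf_mem_and_abs_le A x)
  calc 2⁻¹ * ((c : ℝ) ^ ((1 : ℝ) / m))⁻¹ * x ^ ((1 : ℝ) / m) = z / 2 := by
        rw [hz, Real.div_rpow hx₀ (by positivity)]
        ring
    _ ≤ ⌊z⌋₊ := (Nat.div_two_lt_floor one_le_z).le
    _ ≤ _ := mod_cast floor_le

end Density

section Construction

/-- A sequence of integers taking every value infinitely often: the `k`-th step of the construction
adds a representation of `targetSeq k` if one is missing. -/
def targetSeq (k : ℕ) : ℤ :=
  k.unpair.1 - k.unpair.2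

/-- The state `(A, F)` of the construction after `k` blocks have been adjoined: `A` is the part of
the set chosen so far and `F` the set of integers that will never be chosen. -/
structure IsStage_s6 (h : ℕ) (f : ℤ → ℕ∞) (c k : ℕ) (A F : Finset ℤ) : Prop where
  card_eq : #A = h * k
  card_forbidden_le : #F ≤ k
  disjoint : Disjoint A F
  isWeakSidonBelow : IsWeakSidonBelow h A
  card_reps_le : ∀ n, #(reps h A n) ≤ f n
  abs_le : ∀ a ∈ A, |a| ≤ (c * k ^ (2 * h - 1) : ℕ)

/-- A step of the construction from `(A, F)` to `(A', F')`, which serves the integer `t` and rules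
out `E` as the final set, either because `A'` outgrows it or because it has a forbidden element. -/
structure IsStep (h : ℕ) (f : ℤ → ℕ∞) (t : ℤ) (E : Set ℤ) (A F A' F' : Finset ℤ) : Prop where
  subset : A ⊆ A'
  forbidden_subset : F ⊆ F'
  card_reps_lt : #(reps h A t) < f t → #(reps h A t) < #(reps h A' t)
  subset_or_inter_nonempty : E ⊆ A ∨ (E ∩ F').Nonempty

/-- An infinite run of the construction, diagonalising against the list of sets `E`. -/
structure IsConstruction (h : ℕ) (f : ℤ → ℕ∞) (E : ℕ → Set ℤ) (c : ℕ) (A F : ℕ → Finset ℤ) :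
    Prop where
  isStage : ∀ k, IsStage_s6 h f c k (A k) (F k)
  isStep : ∀ k, IsStep h f (targetSeq k) (E k) (A k) (F k) (A (k + 1)) (F (k + 1))

/-- The constant in the bound on the elements chosen in the first `k` steps, where `z` is the number
of zeros of `f`. -/
def sizeConst (h z : ℕ) : ℕ :=
  2 ^ h * dilationBound h h (z + 1) + (1 + h ^ h + z)

variable {h c k : ℕ} {f : ℤ → ℕ∞} {E : ℕ → Set ℤ} {A F : ℕ → Finset ℤ}

lemma abs_targetSeq_le (k : ℕ) : |targetSeq k| ≤ k := by
  have := k.unpair_left_le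
  have := k.unpair_right_le
  rw [targetSeq, abs_le]
  omega

lemma exists_le_targetSeq_eq (n : ℤ) (K : ℕ) : ∃ k, K ≤ k ∧ targetSeq k = n := by
  refine ⟨Nat.pair (n.toNat + K) ((-n).toNat + K), ?_, ?_⟩
  · exact (Nat.le_add_left _ _).trans (Nat.left_le_pair _ _)
  · rw [targetSeq, Nat.unpair_pair]
    omega

lemma exists_superset_disjoint_inter_nonempty {α : Type*} {A F : Finset α}
    (hAF : Disjoint A F) (E : Set α) : ∃ F', F ⊆ F' ∧ #F' ≤ #F + 1 ∧ Disjoint A F' ∧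
      (E ⊆ A ∨ (E ∩ F').Nonempty) := by
  classical
  by_cases hEA : E ⊆ A
  · exact ⟨F, Subset.rfl, Nat.le_succ _, hAF, Or.inl hEA⟩
  · obtain ⟨e, heE, heA⟩ := Set.not_subset.1 hEA
    exact ⟨insert e F, subset_insert e F, card_insert_le e F,
      disjoint_insert_right.2 ⟨heA, hAF⟩, Or.inr ⟨e, heE, mem_insert_self e F⟩⟩

lemma exists_card_reps_lt {A Z : Finset ℤ} (hZ : Z = f ⁻¹' {0}) (t : ℤ) :
    ∃ u, |u| ≤ |t| + (#A ^ h + #Z : ℕ) ∧ #(reps h A u) < f u ∧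
      (#(reps h A t) < f t → u = t) := by
  by_cases ht : #(reps h A t) < f t
  · exact ⟨t, le_add_of_nonneg_right (Nat.cast_nonneg _), ht, fun _ ↦ rfl⟩
  · obtain ⟨u, hu, huZ, hreps⟩ := exists_notMem_reps_eq_empty h A Z
    refine ⟨u, hu.trans (le_add_of_nonneg_left (abs_nonneg t)), ?_, fun ht' ↦ absurd ht' ht⟩
    rw [hreps, card_empty, Nat.cast_zero, pos_iff_ne_zero]
    rwa [← mem_coe, hZ] at huZ

lemma IsStage_s6.zero (hh : h ≠ 0) (f : ℤ → ℕ∞) (c : ℕ) : IsStage_s6 h f c 0 ∅ ∅ where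
  card_eq := by simp
  card_forbidden_le := by simp
  disjoint := by simp
  isWeakSidonBelow X hX Y hY _ _ _ := by rw [subset_empty.1 hX, subset_empty.1 hY]
  card_reps_le n := by simp [reps, powersetCard_eq_empty.2 (card_empty.trans_lt hh.bot_lt)]
  abs_le := by simp

lemma add_le_sizeConst_mul_pow {m z : ℕ} (hh : 1 ≤ h) (hm : m ≤ k + 1) :
    2 ^ h * dilationBound h (h * k + 1) (z + m) + (k + ((h * k) ^ h + z))
      ≤ sizeConst h z * (k + 1) ^ (2 * h - 1) := by
  have dilation_le : dilationBound h (h * k + 1) (z + m)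
      ≤ dilationBound h h (z + 1) * (k + 1) ^ (2 * h - 1) :=
    dilationBound_le (by omega) (by rw [mul_add]; omega) (by nlinarith) hh
  have k_le : k ≤ (k + 1) ^ (2 * h - 1) := k.le_succ.trans (Nat.le_self_pow (by omega) _)
  have pow_le : (h * k) ^ h ≤ h ^ h * (k + 1) ^ (2 * h - 1) := by
    rw [mul_pow]
    gcongr <;> omega
  have z_le : z ≤ z * (k + 1) ^ (2 * h - 1) := Nat.le_mul_of_pos_right z (by positivity)
  calc 2 ^ h * dilationBound h (h * k + 1) (z + m) + (k + ((h * k) ^ h + z))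
    _ ≤ 2 ^ h * (dilationBound h h (z + 1) * (k + 1) ^ (2 * h - 1)) + ((k + 1) ^ (2 * h - 1)
          + (h ^ h * (k + 1) ^ (2 * h - 1) + z * (k + 1) ^ (2 * h - 1))) := by gcongr
    _ = sizeConst h z * (k + 1) ^ (2 * h - 1) := by
        rw [sizeConst]
        ring

lemma IsStage_s6.exists_isStep {A F Z : Finset ℤ} (hh : 2 ≤ h) (hZ : Z = f ⁻¹' {0})
    (hA : IsStage_s6 h f (sizeConst h #Z) k A F) (E : Set ℤ) :
    ∃ A' F', IsStage_s6 h f (sizeConst h #Z) (k + 1) A' F' ∧ IsStep h f (targetSeq k) E A F A' F' := by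
  obtain ⟨F', hFF', hF'card, hAF', hE⟩ := exists_superset_disjoint_inter_nonempty hA.disjoint E
  obtain ⟨u, hu, hlt, hut⟩ := exists_card_reps_lt (h := h) (A := A) hZ (targetSeq k)
  obtain ⟨N, hN, hNF', rfl, hNabs⟩ := exists_isFreeBlock hh A F' Z u
  replace hF'card : #F' ≤ k + 1 := hF'card.trans (Nat.succ_le_succ hA.card_forbidden_le)
  have new_abs_le : ∀ a ∈ N, |a| ≤ (sizeConst h #Z * (k + 1) ^ (2 * h - 1) : ℕ) :=
    fun a ha ↦ calc |a|
      _ ≤ 2 ^ h * (dilationBound h (h * k + 1) (#Z + #F') : ℤ) + (k + ((h * k) ^ h + #Z : ℕ)) := by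
        rw [← hA.card_eq]
        linarith [hNabs a ha, abs_targetSeq_le k]
      _ ≤ (sizeConst h #Z * (k + 1) ^ (2 * h - 1) : ℕ) :=
        mod_cast add_le_sizeConst_mul_pow (by omega) hF'card
  refine ⟨A ∪ N, F', ⟨?_, hF'card, ?_, ?_, ?_, fun a ha ↦ ?_⟩, ⟨subset_union_left, hFF', ?_, hE⟩⟩
  · rw [card_union_of_disjoint hN.disjoint, hA.card_eq, hN.card_eq, mul_add_one]
  · exact disjoint_union_left.2 ⟨hAF', hNF'⟩
  · exact hN.isWeakSidonBelow_union hA.isWeakSidonBelow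
  · exact (hZ ▸ hN).card_reps_union_le hA.isWeakSidonBelow hA.card_reps_le hlt
  · rcases mem_union.1 ha with haA | haN
    · refine (hA.abs_le a haA).trans (Nat.cast_le.2 ?_)
      gcongr
      exact k.le_succ
    · exact new_abs_le a haN
  · intro ht
    rw [← hut ht]
    exact hN.card_reps_lt_card_reps_union (by omega)

lemma exists_seq_of_forall_exists_step {α : Type*} {P : ℕ → α → Prop} {R : ℕ → α → α → Prop}
    {a₀ : α} (h₀ : P 0 a₀) (hstep : ∀ k a, P k a → ∃ b, P (k + 1) b ∧ R k a b) :
    ∃ a : ℕ → α, ∀ k, P k (a k) ∧ R k (a k) (a (k + 1)) := by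
  choose next hP hR using hstep
  let a (k : ℕ) : {a // P k a} :=
    Nat.rec ⟨a₀, h₀⟩ (fun k a ↦ ⟨next k a.1 a.2, hP k a.1 a.2⟩) k
  exact ⟨fun k ↦ (a k).1, fun k ↦ ⟨(a k).2, hR k (a k).1 (a k).2⟩⟩

lemma exists_isConstruction (hh : 2 ≤ h) (hf : (f ⁻¹' {0}).Finite) (E : ℕ → Set ℤ) :
    ∃ c A F, 0 < c ∧ IsConstruction h f E c A F := by
  obtain ⟨Z, hZ⟩ := hf.exists_finset_coe
  obtain ⟨s, hs⟩ := exists_seq_of_forall_exists_step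
    (P := fun k s ↦ IsStage_s6 h f (sizeConst h #Z) k s.1 s.2)
    (R := fun k s s' ↦ IsStep h f (targetSeq k) (E k) s.1 s.2 s'.1 s'.2)
    (a₀ := (∅, ∅)) (IsStage_s6.zero (by omega) f _) fun k s hs ↦ by
      obtain ⟨A', F', hstage, hstep⟩ := hs.exists_isStep hh hZ (E k)
      exact ⟨(A', F'), hstage, hstep⟩
  exact ⟨sizeConst h #Z, fun k ↦ (s k).1, fun k ↦ (s k).2, by unfold sizeConst; omega,
    fun k ↦ (hs k).1, fun k ↦ (hs k).2⟩

namespace IsConstruction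

lemma monotone (hA : IsConstruction h f E c A F) : Monotone A :=
  monotone_nat_of_le_succ fun k ↦ (hA.isStep k).subset

lemma monotone_forbidden (hA : IsConstruction h f E c A F) : Monotone F :=
  monotone_nat_of_le_succ fun k ↦ (hA.isStep k).forbidden_subset

lemma exists_le_card_reps (hA : IsConstruction h f E c A F) {n : ℤ} {m : ℕ} (hm : m ≤ f n) :
    ∃ k, m ≤ #(reps h (A k) n) := by
  induction m with
  | zero => exact ⟨0, Nat.zero_le _⟩
  | succ m ih =>
    obtain ⟨K, hK⟩ := ih ((Nat.cast_le.2 m.le_succ).trans hm)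
    obtain ⟨k, hKk, rfl⟩ := exists_le_targetSeq_eq n K
    have hmk : m ≤ #(reps h (A k) (targetSeq k)) :=
      hK.trans (card_le_card (reps_mono h _ (hA.monotone hKk)))
    rcases hmk.lt_or_eq with hlt | heq
    · exact ⟨k, hlt⟩
    · have deficient : #(reps h (A k) (targetSeq k)) < f (targetSeq k) := by
        rw [← heq]
        exact (Nat.cast_lt.2 m.lt_succ_self).trans_le hm
      exact ⟨k + 1, hmk.trans_lt ((hA.isStep k).card_reps_lt deficient)⟩

lemma repHres_iUnion (hA : IsConstruction h f E c A F) (n : ℤ) :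
    repHres h (⋃ k, (A k : Set ℤ)) n = f n := by
  rw [repHres_iUnion_of_directed hA.monotone.directed_le]
  refine le_antisymm (iSup_le fun k ↦ (hA.isStage k).card_reps_le n)
    (ENat.forall_natCast_le_iff_le.1 fun m hm ↦ ?_)
  obtain ⟨k, hk⟩ := hA.exists_le_card_reps hm
  exact (Nat.cast_le.2 hk).trans (le_iSup (fun k ↦ (#(reps h (A k) n) : ℕ∞)) k)

lemma disjoint_iUnion (hA : IsConstruction h f E c A F) (j : ℕ) :
    Disjoint (⋃ k, (A k : Set ℤ)) (F j) := by
  refine Set.disjoint_iUnion_left.2 fun k ↦ disjoint_coe.2 ?_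
  exact (hA.isStage (max k j)).disjoint.mono (hA.monotone (le_max_left k j))
    (hA.monotone_forbidden (le_max_right k j))

lemma iUnion_ne (hA : IsConstruction h f E c A F) (hh : 0 < h) (j : ℕ) :
    ⋃ k, (A k : Set ℤ) ≠ E j := fun hE ↦ by
  rcases (hA.isStep j).subset_or_inter_nonempty with hsub | hne
  · have succ_subset : A (j + 1) ⊆ A j :=
      coe_subset.1 ((Set.subset_iUnion (fun k ↦ (A k : Set ℤ)) (j + 1)).trans (hE ▸ hsub))
    have card_le := card_le_card succ_subset
    rw [(hA.isStage _).card_eq, (hA.isStage _).card_eq] at card_le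
    exact j.not_succ_le_self (Nat.le_of_mul_le_mul_left card_le hh)
  · exact Set.not_disjoint_iff_nonempty_inter.2 hne (hE ▸ hA.disjoint_iUnion (j + 1))

lemma exists_mul_rpow_le_ncard_iUnion (hA : IsConstruction h f E c A F) (hc : 0 < c)
    (hh : 0 < h) :
    ∃ c₀ x₀ : ℝ, 0 < c₀ ∧ ∀ x : ℝ, x₀ ≤ x → c₀ * x ^ ((1 : ℝ) / (2 * (h : ℝ) - 1)) ≤
      ({a : ℤ | a ∈ ⋃ k, (A k : Set ℤ) ∧ |(a : ℝ)| ≤ x}.ncard : ℝ) := by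
  have exponent_eq : 2 * (h : ℝ) - 1 = (2 * h - 1 : ℕ) := by
    rw [Nat.cast_pred (by omega)]
    push_cast
    rfl
  rw [exponent_eq]
  refine exists_mul_rpow_le_ncard hc (by omega)
    (Set.subset_iUnion fun k ↦ (A k : Set ℤ)) (fun k ↦ ?_) fun k ↦ (hA.isStage k).abs_le
  rw [(hA.isStage k).card_eq]
  exact Nat.le_mul_of_pos_left k hh

end IsConstruction

end Construction

end

theorem stmt6 (h : ℕ) (hh : 2 ≤ h) (f : ℤ → ℕ∞) (hf : (f ⁻¹' {0}).Finite) :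
    ¬ Set.Countable {A : Set ℤ |
      (∀ n : ℤ, repHres h A n = f n) ∧
      ∃ c₀ x₀ : ℝ, 0 < c₀ ∧ ∀ x : ℝ, x₀ ≤ x →
        c₀ * x ^ ((1 : ℝ) / (2 * (h : ℝ) - 1)) ≤
          ({a : ℤ | a ∈ A ∧ |(a : ℝ)| ≤ x}.ncard : ℝ)} := by
  intro hcountable
  obtain ⟨E, hE⟩ := Set.countable_iff_exists_subset_range.1 hcountable
  obtain ⟨c, A, F, hc, hA⟩ := exists_isConstruction hh hf E
  obtain ⟨j, hj⟩ := hE ⟨hA.repHres_iUnion, hA.exists_mul_rpow_le_ncard_iUnion hc (by omega)⟩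
  exact hA.iUnion_ne (by omega) j hj.symm
end
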